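/- arXiv:1910.06657 — 4 statements merged into one kernel-verified Lean document; each statement's English description precedes it below -/
import Mathlib

section
/- (Soundness of LNIF) For every linear nested sequent 𝒢, if 𝒢 is derivable in LNIF, then ⊨ ∀̄ι(𝒢), i.e., the universal closure of the interpretation ι(𝒢) is satisfied at every world of every relational model. -/
/-!
Soundness is proved contrapositively.  Unfolding the interpretation `ι(G)`, a world `w` fails to
satisfy it exactly when there is a chain `w ≤ u₁ ≤ ⋯ ≤ uₙ` of worlds such that `uᵢ` makes every
antecedent formula of the `i`-th component true and every succedent formula of it false
(`sat_interp_iff`; such chains are `Refutes`).  It then suffices to show that every rule transports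
a refuting chain for its conclusion to one for some premise, and that no axiom has one.

* The axioms and `lift` rest on persistence of satisfaction along `R` (`Sat.mono`).
* For the two-premise rules `impr2` and `allr2`, the world `v` above `u₁` witnessing that `A ⊃ B`
  or `∀ x A` fails at `u₁` is comparable to the next world `u₂` of the chain, by connectedness.
  If `v ≤ u₂`, inserting `v` refutes the first premise; if `u₂ ≤ v`, the principal formula also
  fails at `u₂`, which refutes the second.
* For the rules with an eigenvariable `a`, the assignment is changed at `a` only; since `a` is
  fresh, the rest of the chain is unaffected (`Refutes.congr`).  Domains are constant along `R`,
  so the witness lies in the domain of the root world and the new assignment is admissible.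
-/

/-- First-order formulas: atoms are predicate symbols (indexed by `ℕ`) applied to
arguments that are either bound variables (`Sum.inl`, named by `ℕ`) or
parameters (`Sum.inr`, drawn from `α`). -/
inductive Formula (α : Type) : Type
  | atom : ℕ → List (ℕ ⊕ α) → Formula α
  | bot  : Formula α
  | or   : Formula α → Formula α → Formula α
  | and  : Formula α → Formula α → Formula α
  | imp  : Formula α → Formula α → Formula α
  | all  : ℕ → Formula α → Formula α
  | ex   : ℕ → Formula α → Formula α

namespace Formula

/-- `A.substP a x` is `A[a/x]`: substitute the parameter `a` for all free
occurrences of the variable `x` in `A`. -/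
def substP {α : Type} (a : α) (x : ℕ) : Formula α → Formula α
  | atom p ts => atom p (ts.map (fun t => match t with
      | Sum.inl y => if y = x then Sum.inr a else Sum.inl y
      | Sum.inr b => Sum.inr b))
  | bot => bot
  | or A B => or (A.substP a x) (B.substP a x)
  | and A B => and (A.substP a x) (B.substP a x)
  | imp A B => imp (A.substP a x) (B.substP a x)
  | all y A => all y (if y = x then A else A.substP a x)
  | ex y A => ex y (if y = x then A else A.substP a x)

/-- The parameters occurring in a formula. -/
def params {α : Type} : Formula α → List α
  | atom _ ts => ts.filterMap Sum.getRight?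
  | bot => []
  | or A B => A.params ++ B.params
  | and A B => A.params ++ B.params
  | imp A B => A.params ++ B.params
  | all _ A => A.params
  | ex _ A => A.params

/-- The free variables of a formula. -/
def freeVars {α : Type} : Formula α → List ℕ
  | atom _ ts => ts.filterMap Sum.getLeft?
  | bot => []
  | or A B => A.freeVars ++ B.freeVars
  | and A B => A.freeVars ++ B.freeVars
  | imp A B => A.freeVars ++ B.freeVars
  | all x A => A.freeVars.filter (fun y => y != x)
  | ex x A => A.freeVars.filter (fun y => y != x)

/-- Apply a function to every parameter of a formula. -/
def mapParam {α β : Type} (f : α → β) : Formula α → Formula β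
  | atom p ts => atom p (ts.map (Sum.map id f))
  | bot => bot
  | or A B => or (A.mapParam f) (B.mapParam f)
  | and A B => and (A.mapParam f) (B.mapParam f)
  | imp A B => imp (A.mapParam f) (B.mapParam f)
  | all x A => all x (A.mapParam f)
  | ex x A => ex x (A.mapParam f)

end Formula

/-- A linear nested sequent: a list of components `Γ ⊢ Δ`, each a pair of
finite multisets of formulas. -/
abbrev LNS (α : Type) := List (Multiset (Formula α) × Multiset (Formula α))

/-- The parameter `a` occurs somewhere in the linear nested sequent `G`. -/
def occursInLNS {α : Type} (a : α) (G : LNS α) : Prop :=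
  ∃ C ∈ G, (∃ B ∈ C.1, a ∈ B.params) ∨ (∃ B ∈ C.2, a ∈ B.params)

/-- Derivability in the linear nested sequent calculus `LNIF`. -/
inductive LNIF {α : Type} : LNS α → Prop
  | id1 (G H : LNS α) (Γ Δ : Multiset (Formula α)) (p : ℕ) (ts : List (ℕ ⊕ α)) :
      LNIF (G ++ [(Γ + {Formula.atom p ts}, {Formula.atom p ts} + Δ)] ++ H)
  | id2 (G H F : LNS α) (Γ₁ Δ₁ Γ₂ Δ₂ : Multiset (Formula α)) (p : ℕ) (ts : List (ℕ ⊕ α)) :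
      LNIF (G ++ [(Γ₁ + {Formula.atom p ts}, Δ₁)] ++ H ++ [(Γ₂, {Formula.atom p ts} + Δ₂)] ++ F)
  | botl (G H : LNS α) (Γ Δ : Multiset (Formula α)) :
      LNIF (G ++ [(Γ + {Formula.bot}, Δ)] ++ H)
  | andl (G H : LNS α) (Γ Δ : Multiset (Formula α)) (A B : Formula α) :
      LNIF (G ++ [(Γ + {A, B}, Δ)] ++ H) →
      LNIF (G ++ [(Γ + {A.and B}, Δ)] ++ H)
  | andr (G H : LNS α) (Γ Δ : Multiset (Formula α)) (A B : Formula α) :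
      LNIF (G ++ [(Γ, Δ + {A})] ++ H) → LNIF (G ++ [(Γ, Δ + {B})] ++ H) →
      LNIF (G ++ [(Γ, Δ + {A.and B})] ++ H)
  | orl (G H : LNS α) (Γ Δ : Multiset (Formula α)) (A B : Formula α) :
      LNIF (G ++ [(Γ + {A}, Δ)] ++ H) → LNIF (G ++ [(Γ + {B}, Δ)] ++ H) →
      LNIF (G ++ [(Γ + {A.or B}, Δ)] ++ H)
  | orr (G H : LNS α) (Γ Δ : Multiset (Formula α)) (A B : Formula α) :
      LNIF (G ++ [(Γ, Δ + {A, B})] ++ H) →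
      LNIF (G ++ [(Γ, Δ + {A.or B})] ++ H)
  | impl (G H : LNS α) (Γ Δ : Multiset (Formula α)) (A B : Formula α) :
      LNIF (G ++ [(Γ + {B}, Δ)] ++ H) →
      LNIF (G ++ [(Γ + {A.imp B}, {A} + Δ)] ++ H) →
      LNIF (G ++ [(Γ + {A.imp B}, Δ)] ++ H)
  | impr1 (G : LNS α) (Γ Δ : Multiset (Formula α)) (A B : Formula α) :
      LNIF (G ++ [(Γ, Δ), ({A}, {B})]) →
      LNIF (G ++ [(Γ, Δ + {A.imp B})])
  | impr2 (G H : LNS α) (Γ₁ Δ₁ Γ₂ Δ₂ : Multiset (Formula α)) (A B : Formula α) :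
      LNIF (G ++ [(Γ₁, Δ₁), ({A}, {B}), (Γ₂, Δ₂)] ++ H) →
      LNIF (G ++ [(Γ₁, Δ₁), (Γ₂, Δ₂ + {A.imp B})] ++ H) →
      LNIF (G ++ [(Γ₁, Δ₁ + {A.imp B}), (Γ₂, Δ₂)] ++ H)
  | lift (G H : LNS α) (Γ₁ Δ₁ Γ₂ Δ₂ : Multiset (Formula α)) (A : Formula α) :
      LNIF (G ++ [(Γ₁ + {A}, Δ₁), (Γ₂ + {A}, Δ₂)] ++ H) →
      LNIF (G ++ [(Γ₁ + {A}, Δ₁), (Γ₂, Δ₂)] ++ H)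
  | alll (G H : LNS α) (Γ Δ : Multiset (Formula α)) (A : Formula α) (x : ℕ) (a : α) :
      LNIF (G ++ [(Γ + {A.substP a x, Formula.all x A}, Δ)] ++ H) →
      LNIF (G ++ [(Γ + {Formula.all x A}, Δ)] ++ H)
  | allr1 (G : LNS α) (Γ Δ : Multiset (Formula α)) (A : Formula α) (x : ℕ) (a : α) :
      ¬ occursInLNS a (G ++ [(Γ, Δ + {Formula.all x A})]) →
      LNIF (G ++ [(Γ, Δ), (0, {A.substP a x})]) →
      LNIF (G ++ [(Γ, Δ + {Formula.all x A})])
  | allr2 (G H : LNS α) (Γ₁ Δ₁ Γ₂ Δ₂ : Multiset (Formula α)) (A : Formula α) (x : ℕ) (a : α) :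
      ¬ occursInLNS a (G ++ [(Γ₁, Δ₁ + {Formula.all x A}), (Γ₂, Δ₂)] ++ H) →
      LNIF (G ++ [(Γ₁, Δ₁), (0, {A.substP a x}), (Γ₂, Δ₂)] ++ H) →
      LNIF (G ++ [(Γ₁, Δ₁), (Γ₂, Δ₂ + {Formula.all x A})] ++ H) →
      LNIF (G ++ [(Γ₁, Δ₁ + {Formula.all x A}), (Γ₂, Δ₂)] ++ H)
  | exl (G H : LNS α) (Γ Δ : Multiset (Formula α)) (A : Formula α) (x : ℕ) (a : α) :
      ¬ occursInLNS a (G ++ [(Γ + {Formula.ex x A}, Δ)] ++ H) →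
      LNIF (G ++ [(Γ + {A.substP a x}, Δ)] ++ H) →
      LNIF (G ++ [(Γ + {Formula.ex x A}, Δ)] ++ H)
  | exr (G H : LNS α) (Γ Δ : Multiset (Formula α)) (A : Formula α) (x : ℕ) (a : α) :
      LNIF (G ++ [(Γ, {A.substP a x} + Δ)] ++ H) →
      LNIF (G ++ [(Γ, {Formula.ex x A} + Δ)] ++ H)

namespace Formula

/-- Size of a formula (used for the termination of satisfaction). -/
def size {α : Type} : Formula α → ℕ
  | atom _ _ => 1
  | bot => 1
  | or A B => A.size + B.size + 1
  | and A B => A.size + B.size + 1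
  | imp A B => A.size + B.size + 1
  | all _ A => A.size + 1
  | ex _ A => A.size + 1

theorem size_substP {α : Type} (a : α) (x : ℕ) (A : Formula α) :
    (A.substP a x).size = A.size := by
  induction A <;> simp [substP, size, *] <;> split <;> simp [size, *]

end Formula

/-- A relational model for intuitionistic fuzzy logic: a nonempty set of
worlds with a reflexive, transitive, antisymmetric and connected relation,
constant nonempty domains, and a monotone valuation. -/
structure RModel (δ : Type) where
  W : Type
  wne : Nonempty W
  R : W → W → Prop
  refl : ∀ w, R w w
  trans : ∀ {w u v}, R w u → R u v → R w v
  antisymm : ∀ {w u}, R w u → R u w → w = u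
  connected : ∀ {w u v}, R w u → R w v → R u v ∨ R v u
  D : W → Set δ
  Dne : ∀ w, (D w).Nonempty
  CD : ∀ {w u}, R w u → D w = D u
  V : ℕ → W → Set (List δ)
  Vdom : ∀ p w as, as ∈ V p w → ∀ a ∈ as, a ∈ D w
  TP : ∀ p {w u}, R w u → V p w ⊆ V p u

/-- Satisfaction `M, w ⊩ A` for `D_w`-sentences (formulas whose parameters
are drawn from the model's domain type). -/
def Sat {δ : Type} (M : RModel δ) : M.W → Formula δ → Prop
  | w, .atom p ts => ∃ as : List δ, ts = as.map Sum.inr ∧ as ∈ M.V p w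
  | _, .bot => False
  | w, .or A B => Sat M w A ∨ Sat M w B
  | w, .and A B => Sat M w A ∧ Sat M w B
  | w, .imp A B => ∀ u, M.R w u → Sat M u A → Sat M u B
  | w, .all x A => ∀ u, M.R w u → ∀ a ∈ M.D u, Sat M u (A.substP a x)
  | w, .ex x A => ∃ a ∈ M.D w, Sat M w (A.substP a x)
termination_by w A => A.size
decreasing_by all_goals simp [Formula.size, Formula.size_substP]; try omega

/-- Conjunction of a list of formulas, reading the empty conjunction as `⊥ ⊃ ⊥`. -/
def conjL {α : Type} : List (Formula α) → Formula α
  | [] => Formula.bot.imp Formula.bot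
  | [A] => A
  | A :: B :: rest => A.and (conjL (B :: rest))

/-- Disjunction of a list of formulas, reading the empty disjunction as `⊥`. -/
def disjL {α : Type} : List (Formula α) → Formula α
  | [] => Formula.bot
  | [A] => A
  | A :: B :: rest => A.or (disjL (B :: rest))

/-- The formula interpretation `ι` of a linear nested sequent:
`ι(Γ ⊢ Δ) = ⋀Γ ⊃ ⋁Δ` and `ι(Γ ⊢ Δ ∥ 𝒢) = ⋀Γ ⊃ (⋁Δ ∨ ι(𝒢))`. -/
noncomputable def interp {α : Type} : LNS α → Formula α
  | [] => Formula.bot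
  | [(Γ, Δ)] => (conjL Γ.toList).imp (disjL Δ.toList)
  | (Γ, Δ) :: C :: rest => (conjL Γ.toList).imp ((disjL Δ.toList).or (interp (C :: rest)))

/-- `⊨ ∀̄ A`: the universal closure of `A` (over its parameters) is satisfied at
every world of every relational model, i.e. at every world every interpretation
of the parameters as domain elements satisfies `A`. -/
def validClosure {α : Type} (A : Formula α) : Prop :=
  ∀ (δ : Type) (M : RModel δ) (w : M.W) (σ : α → δ),
    (∀ a : α, σ a ∈ M.D w) → Sat M w (A.mapParam σ)

/-! ### Substitution and parameter assignments -/

namespace Formula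

theorem mapParam_substP {α β : Type} (σ : α → β) (a : α) (x : ℕ) (A : Formula α) :
    (A.substP a x).mapParam σ = (A.mapParam σ).substP (σ a) x := by
  induction A with
  | atom p ts =>
    simp only [substP, mapParam, List.map_map]
    congr 1
    apply List.map_congr_left
    rintro (y | b) _
    · by_cases h : y = x <;> simp [h]
    · simp
  | bot => rfl
  | or A B hA hB => simp [substP, mapParam, hA, hB]
  | and A B hA hB => simp [substP, mapParam, hA, hB]
  | imp A B hA hB => simp [substP, mapParam, hA, hB]
  | all y A hA => by_cases h : y = x <;> simp [substP, mapParam, hA, h]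
  | ex y A hA => by_cases h : y = x <;> simp [substP, mapParam, hA, h]

theorem mapParam_congr {α β : Type} {σ τ : α → β} (A : Formula α)
    (h : ∀ a ∈ A.params, σ a = τ a) : A.mapParam σ = A.mapParam τ := by
  induction A with
  | atom p ts =>
    simp only [mapParam]
    congr 1
    apply List.map_congr_left
    rintro (y | b) hb
    · simp
    · have := h b (by simpa [params] using hb)
      simp [this]
  | bot => rfl
  | or A B hA hB =>
    simp only [params, List.mem_append] at h
    simp [mapParam, hA fun a ha => h a (.inl ha), hB fun a ha => h a (.inr ha)]
  | and A B hA hB =>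
    simp only [params, List.mem_append] at h
    simp [mapParam, hA fun a ha => h a (.inl ha), hB fun a ha => h a (.inr ha)]
  | imp A B hA hB =>
    simp only [params, List.mem_append] at h
    simp [mapParam, hA fun a ha => h a (.inl ha), hB fun a ha => h a (.inr ha)]
  | all y A hA => simp [mapParam, hA h]
  | ex y A hA => simp [mapParam, hA h]

end Formula

/-! ### Satisfaction and refuting chains -/

section Semantics

variable {α δ : Type} {M : RModel δ}

theorem Sat.mono {w u : M.W} (hwu : M.R w u) (A : Formula δ) (h : Sat M w A) : Sat M u A := by
  -- The `∃` case needs the claim for `A[a/x]`, not a subformula, hence induction on the size.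
  induction hn : A.size using Nat.strong_induction_on generalizing A with
  | _ n ih =>
    subst hn
    cases A with
    | atom p ts =>
      rw [Sat] at h ⊢
      obtain ⟨as, h1, h2⟩ := h
      exact ⟨as, h1, M.TP p hwu h2⟩
    | bot => simp [Sat] at h
    | or A B =>
      rw [Sat] at h ⊢
      exact h.imp (fun h => ih _ (by simp only [Formula.size]; omega) _ h rfl)
        (fun h => ih _ (by simp only [Formula.size]; omega) _ h rfl)
    | and A B =>
      rw [Sat] at h ⊢
      exact h.imp (fun h => ih _ (by simp only [Formula.size]; omega) _ h rfl)
        (fun h => ih _ (by simp only [Formula.size]; omega) _ h rfl)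
    | imp A B =>
      rw [Sat] at h ⊢
      exact fun v hv => h v (M.trans hwu hv)
    | all x A =>
      rw [Sat] at h ⊢
      exact fun v hv => h v (M.trans hwu hv)
    | ex x A =>
      rw [Sat] at h ⊢
      obtain ⟨a, ha, h⟩ := h
      exact ⟨a, M.CD hwu ▸ ha, ih _ (by simp [Formula.size, Formula.size_substP]) _ h rfl⟩

theorem sat_conjL (σ : α → δ) (w : M.W) (l : List (Formula α)) :
    Sat M w ((conjL l).mapParam σ) ↔ ∀ A ∈ l, Sat M w (A.mapParam σ) := by
  induction l using conjL.induct with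
  | case1 => simp [conjL, Formula.mapParam, Sat]
  | case2 A => simp [conjL]
  | case3 A B l ih =>
    rw [conjL, Formula.mapParam, Sat, ih]
    simp

theorem sat_disjL (σ : α → δ) (w : M.W) (l : List (Formula α)) :
    Sat M w ((disjL l).mapParam σ) ↔ ∃ A ∈ l, Sat M w (A.mapParam σ) := by
  induction l using disjL.induct with
  | case1 => simp [disjL, Formula.mapParam, Sat]
  | case2 A => simp [disjL]
  | case3 A B l ih =>
    rw [disjL, Formula.mapParam, Sat, ih]
    simp

/-- The world `u` refutes the component `Γ ⊢ Δ` under the assignment `σ`: all of `Γ` holds at `u`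
and none of `Δ` does. -/
def RefutesAt (M : RModel δ) (σ : α → δ) (u : M.W)
    (C : Multiset (Formula α) × Multiset (Formula α)) : Prop :=
  (∀ A ∈ C.1, Sat M u (A.mapParam σ)) ∧ ∀ B ∈ C.2, ¬ Sat M u (B.mapParam σ)

/-- `Refutes M σ w G u`: some chain of worlds `w ≤ u₁ ≤ ⋯ ≤ uₙ = u` refutes the components of `G`
one after the other.  For empty `G` the chain consists of `w = u` alone; recording the last world
makes the notion compositional for concatenation. -/
def Refutes (M : RModel δ) (σ : α → δ) : M.W → LNS α → M.W → Prop
  | w, [], u => w = u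
  | w, C :: G, u => ∃ v, M.R w v ∧ RefutesAt M σ v C ∧ Refutes M σ v G u

theorem refutes_append {σ : α → δ} {w u : M.W} {G H : LNS α} :
    Refutes M σ w (G ++ H) u ↔ ∃ v, Refutes M σ w G v ∧ Refutes M σ v H u := by
  induction G generalizing w with
  | nil => simp [Refutes]
  | cons C G ih =>
    simp only [List.cons_append, Refutes, ih]
    constructor
    · rintro ⟨v, h1, h2, x, h3, h4⟩
      exact ⟨x, ⟨v, h1, h2, h3⟩, h4⟩
    · rintro ⟨x, ⟨v, h1, h2, h3⟩, h4⟩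
      exact ⟨v, h1, h2, x, h3, h4⟩

theorem Refutes.rel {σ : α → δ} {w u : M.W} {G : LNS α} (h : Refutes M σ w G u) : M.R w u := by
  induction G generalizing w with
  | nil => exact h ▸ M.refl w
  | cons C G ih =>
    obtain ⟨v, h1, -, h2⟩ := h
    exact M.trans h1 (ih h2)

/-- A world fails `ι(G)` exactly when a refuting chain for `G` starts above it.  This includes
`G = []`, where `interp` is `⊥` and the trivial chain refutes. -/
theorem sat_interp_iff (σ : α → δ) (w : M.W) (G : LNS α) :
    Sat M w ((interp G).mapParam σ) ↔ ∀ u, ¬ Refutes M σ w G u := by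
  induction G using interp.induct generalizing w with
  | case1 => simp [interp, Formula.mapParam, Sat, Refutes]
  | case2 Γ Δ =>
    rw [interp, Formula.mapParam, Sat]
    simp only [sat_conjL, sat_disjL, Multiset.mem_toList, Refutes, RefutesAt]
    constructor
    · rintro h u ⟨v, h1, ⟨h2, h3⟩, -⟩
      obtain ⟨A, hA, hs⟩ := h v h1 h2
      exact h3 A hA hs
    · intro h v h1 h2
      by_contra h3
      push Not at h3
      exact h v ⟨v, h1, ⟨h2, h3⟩, rfl⟩
  | case3 Γ Δ C G ih =>
    rw [interp, Formula.mapParam, Sat]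
    simp only [Formula.mapParam]
    constructor
    · rintro h u ⟨v, h1, ⟨h2, h3⟩, h4⟩
      have := h v h1 ((sat_conjL _ _ _).2 (by simpa using h2))
      rw [Sat, sat_disjL, ih] at this
      rcases this with ⟨A, hA, hs⟩ | h5
      · exact h3 A (by simpa using hA) hs
      · exact h5 u h4
    · intro h v h1 h2
      rw [Sat, sat_disjL, ih]
      by_contra! h3
      obtain ⟨h3, u, h4⟩ := h3
      rw [sat_conjL] at h2
      exact h u ⟨v, h1, ⟨by simpa using h2, by simpa using h3⟩, h4⟩

theorem RefutesAt.congr {σ τ : α → δ} {u : M.W} {C : Multiset (Formula α) × Multiset (Formula α)}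
    (h1 : ∀ A ∈ C.1, ∀ a ∈ A.params, σ a = τ a) (h2 : ∀ A ∈ C.2, ∀ a ∈ A.params, σ a = τ a)
    (h : RefutesAt M σ u C) : RefutesAt M τ u C :=
  ⟨fun A hA => Formula.mapParam_congr A (h1 A hA) ▸ h.1 A hA,
    fun A hA => Formula.mapParam_congr A (h2 A hA) ▸ h.2 A hA⟩

theorem Refutes.congr {σ τ : α → δ} {w u : M.W} {G : LNS α}
    (hG : ∀ a, occursInLNS a G → σ a = τ a) (h : Refutes M σ w G u) : Refutes M τ w G u := by
  induction G generalizing w with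
  | nil => exact h
  | cons C G ih =>
    obtain ⟨v, h1, h2, h3⟩ := h
    refine ⟨v, h1, h2.congr ?_ ?_, ih ?_ h3⟩
    · exact fun A hA a ha => hG a ⟨C, by simp, .inl ⟨A, hA, ha⟩⟩
    · exact fun A hA a ha => hG a ⟨C, by simp, .inr ⟨A, hA, ha⟩⟩
    · rintro a ⟨D, hD, ha⟩
      exact hG a ⟨D, by simp [hD], ha⟩

open Classical in
/-- Reassigning a parameter that does not occur in the sequent keeps a refuting chain refuting. -/
theorem Refutes.update {σ : α → δ} {w u : M.W} {G : LNS α} {a : α} (d : δ)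
    (hG : ¬ occursInLNS a G) (h : Refutes M σ w G u) :
    Refutes M (Function.update σ a d) w G u := by
  refine h.congr fun b hb => ?_
  have : b ≠ a := by
    rintro rfl
    exact hG hb
  simp [this]

theorem occursInLNS_append {a : α} {G H : LNS α} :
    occursInLNS a (G ++ H) ↔ occursInLNS a G ∨ occursInLNS a H := by
  simp only [occursInLNS, List.mem_append, or_and_right, exists_or]

open Classical in
theorem RefutesAt.update {σ : α → δ} {u : M.W} {a : α} (d : δ)
    {C : Multiset (Formula α) × Multiset (Formula α)} (hC : ¬ occursInLNS a [C])
    (h : RefutesAt M σ u C) : RefutesAt M (Function.update σ a d) u C := by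
  have h' : Refutes M σ u [C] u := ⟨u, M.refl u, h, rfl⟩
  obtain ⟨v, -, h1, rfl⟩ := h'.update d hC
  exact h1

open Classical in
/-- The eigenvariable principle: with `a` fresh for `A`, evaluating `A[a/x]` under `σ[a ↦ d]` is
evaluating `A` under `σ` with `d` substituted for `x`. -/
theorem mapParam_update_substP {σ : α → δ} {a : α} {A : Formula α} (ha : a ∉ A.params) (d : δ)
    (x : ℕ) :
    (A.substP a x).mapParam (Function.update σ a d) = (A.mapParam σ).substP d x := by
  rw [Formula.mapParam_substP, Function.update_self]
  congr 1
  refine Formula.mapParam_congr A fun b hb => ?_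
  have : b ≠ a := by
    rintro rfl
    exact ha hb
  simp [this]

/-! ### Splitting refutations along components -/

theorem refutes_cons {σ : α → δ} {w u : M.W} {G : LNS α}
    {C : Multiset (Formula α) × Multiset (Formula α)} :
    Refutes M σ w (C :: G) u ↔ ∃ v, M.R w v ∧ RefutesAt M σ v C ∧ Refutes M σ v G u := Iff.rfl

theorem refutesAt_left {σ : α → δ} {u : M.W} {Γ Γ' Δ : Multiset (Formula α)} :
    RefutesAt M σ u (Γ + Γ', Δ) ↔
      RefutesAt M σ u (Γ, Δ) ∧ ∀ A ∈ Γ', Sat M u (A.mapParam σ) := by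
  simp only [RefutesAt, Multiset.mem_add, or_imp, forall_and]
  tauto

theorem refutesAt_right {σ : α → δ} {u : M.W} {Γ Δ Δ' : Multiset (Formula α)} :
    RefutesAt M σ u (Γ, Δ + Δ') ↔
      RefutesAt M σ u (Γ, Δ) ∧ ∀ A ∈ Δ', ¬ Sat M u (A.mapParam σ) := by
  simp only [RefutesAt, Multiset.mem_add, or_imp, forall_and]
  tauto

/-- A refuting chain passes through a world `v` refuting the component `C`, and refutes any sequent
in which `C` is replaced by another component that `v` refutes.  This reduces the rules acting on a
single component to reasoning at one world. -/
theorem Refutes.replace {σ : α → δ} {w u : M.W} {G H : LNS α}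
    {C : Multiset (Formula α) × Multiset (Formula α)}
    (h : Refutes M σ w (G ++ [C] ++ H) u) :
    ∃ v, RefutesAt M σ v C ∧ M.R w v ∧
      ∀ C', RefutesAt M σ v C' → Refutes M σ w (G ++ [C'] ++ H) u := by
  simp only [List.append_assoc, List.singleton_append, refutes_append, refutes_cons] at h ⊢
  obtain ⟨x, h1, v, h2, h3, h4⟩ := h
  exact ⟨v, h3, M.trans h1.rel h2, fun C' h5 => ⟨x, h1, v, h2, h5, h4⟩⟩

end Semantics

/-! ### Soundness -/

open Classical in
/-- No sequent derivable in `LNIF` has a refuting chain starting at a world whose domain contains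
the values of all parameters. -/
theorem LNIF.not_refutes {α δ : Type} (M : RModel δ) (w : M.W) {G : LNS α} (hd : LNIF G) :
    ∀ (σ : α → δ), (∀ a, σ a ∈ M.D w) → ∀ u, ¬ Refutes M σ w G u := by
  -- The witness `d` comes from a later world of the chain; constant domains put it in `D w`.
  have adm : ∀ (σ : α → δ), (∀ a, σ a ∈ M.D w) → ∀ a, ∀ {v d}, M.R w v → d ∈ M.D v →
      ∀ b, Function.update σ a d b ∈ M.D w := by
    intro σ hσ a v d hv hd b
    by_cases h : b = a
    · subst h
      simpa [M.CD hv] using hd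
    · simpa [h] using hσ b
  induction hd with
  | id1 G H Γ Δ p ts =>
    intro σ hσ u h
    obtain ⟨v, hC, hv, -⟩ := h.replace
    rw [add_comm {_} Δ] at hC
    simp only [refutesAt_left, refutesAt_right, Multiset.mem_singleton, forall_eq] at hC
    exact hC.2 hC.1.2
  | id2 G H F Γ₁ Δ₁ Γ₂ Δ₂ p ts =>
    intro σ hσ u h
    simp only [List.append_assoc, List.singleton_append, refutes_append, refutes_cons] at h
    obtain ⟨x, -, y, ⟨v, -, h1, hvy⟩, z, hyz, h2, -⟩ := h
    rw [add_comm {_} Δ₂] at h2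
    simp only [refutesAt_left, refutesAt_right, Multiset.mem_singleton, forall_eq] at h1 h2
    exact h2.2 (Sat.mono (M.trans hvy.rel hyz) _ h1.2)
  | botl G H Γ Δ =>
    intro σ hσ u h
    obtain ⟨v, hC, hv, -⟩ := h.replace
    simp [refutesAt_left, Formula.mapParam, Sat] at hC
  | andl G H Γ Δ A B _ ih =>
    intro σ hσ u h
    obtain ⟨v, hC, hv, hr⟩ := h.replace
    refine ih σ hσ u (hr _ (refutesAt_left.2 ?_))
    simpa [refutesAt_left, Formula.mapParam, Sat] using hC
  | andr G H Γ Δ A B _ _ ih1 ih2 =>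
    intro σ hσ u h
    obtain ⟨v, hC, hv, hr⟩ := h.replace
    simp only [refutesAt_right, Formula.mapParam, Sat, Multiset.mem_singleton, forall_eq] at hC
    by_cases hA : Sat M v (A.mapParam σ)
    · exact ih2 σ hσ u (hr _ (by simp [refutesAt_right]; tauto))
    · exact ih1 σ hσ u (hr _ (by simp [refutesAt_right]; tauto))
  | orl G H Γ Δ A B _ _ ih1 ih2 =>
    intro σ hσ u h
    obtain ⟨v, hC, hv, hr⟩ := h.replace
    simp only [refutesAt_left, Formula.mapParam, Sat, Multiset.mem_singleton, forall_eq] at hC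
    rcases hC.2 with hA | hB
    · exact ih1 σ hσ u (hr _ (by simp [refutesAt_left]; tauto))
    · exact ih2 σ hσ u (hr _ (by simp [refutesAt_left]; tauto))
  | orr G H Γ Δ A B _ ih =>
    intro σ hσ u h
    obtain ⟨v, hC, hv, hr⟩ := h.replace
    refine ih σ hσ u (hr _ (refutesAt_right.2 ?_))
    simpa [refutesAt_right, Formula.mapParam, Sat] using hC
  | impl G H Γ Δ A B _ _ ih1 ih2 =>
    intro σ hσ u h
    obtain ⟨v, hC, hv, hr⟩ := h.replace
    by_cases hA : Sat M v (A.mapParam σ)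
    · simp only [refutesAt_left, Formula.mapParam, Sat, Multiset.mem_singleton, forall_eq] at hC
      have := hC.2 v (M.refl v) hA
      exact ih1 σ hσ u (hr _ (by simp [refutesAt_left]; tauto))
    · refine ih2 σ hσ u (hr _ ?_)
      rw [add_comm {_} Δ, refutesAt_right]
      exact ⟨hC, by simpa using hA⟩
  | impr1 G Γ Δ A B _ ih =>
    intro σ hσ u h
    simp only [refutes_append, refutes_cons, refutesAt_right, Formula.mapParam, Sat,
      Multiset.mem_singleton, forall_eq] at h
    obtain ⟨x, hx, v, hxv, ⟨hC, hI⟩, -⟩ := h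
    push Not at hI
    obtain ⟨z, hvz, hA, hB⟩ := hI
    refine ih σ hσ z (refutes_append.2 ⟨x, hx, v, hxv, hC, z, hvz, ?_, rfl⟩)
    simpa [RefutesAt] using ⟨hA, hB⟩
  | impr2 G H Γ₁ Δ₁ Γ₂ Δ₂ A B _ _ ih1 ih2 =>
    intro σ hσ u h
    simp only [List.append_assoc, List.cons_append, List.nil_append, refutes_append, refutes_cons,
      refutesAt_right, Formula.mapParam, Sat, Multiset.mem_singleton, forall_eq] at h ih1 ih2
    obtain ⟨x, hx, v, hxv, ⟨hC, hI⟩, y, hvy, hy, hH⟩ := h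
    push Not at hI
    obtain ⟨z, hvz, hA, hB⟩ := hI
    rcases M.connected hvz hvy with hzy | hyz
    · exact ih1 σ hσ u ⟨x, hx, v, hxv, hC, z, hvz, by simpa [RefutesAt] using ⟨hA, hB⟩,
        y, hzy, hy, hH⟩
    · exact ih2 σ hσ u ⟨x, hx, v, hxv, hC, y, hvy, ⟨hy, fun h => hB (h z hyz hA)⟩, hH⟩
  | lift G H Γ₁ Δ₁ Γ₂ Δ₂ A _ ih =>
    intro σ hσ u h
    simp only [List.append_assoc, List.cons_append, List.nil_append, refutes_append, refutes_cons,
      refutesAt_left, Multiset.mem_singleton, forall_eq] at h ih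
    obtain ⟨x, hx, v, hxv, ⟨hC, hA⟩, y, hvy, hy, hH⟩ := h
    exact ih σ hσ u ⟨x, hx, v, hxv, ⟨hC, hA⟩, y, hvy, ⟨hy, hA.mono hvy⟩, hH⟩
  | alll G H Γ Δ A x a _ ih =>
    intro σ hσ u h
    obtain ⟨v, hC, hv, hr⟩ := h.replace
    refine ih σ hσ u (hr _ ?_)
    simp only [refutesAt_left, Multiset.mem_singleton, forall_eq] at hC
    have hA := hC.2
    simp only [Formula.mapParam, Sat] at hA
    have := hA v (M.refl v) (σ a) (M.CD hv ▸ hσ a)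
    rw [← Formula.mapParam_substP] at this
    exact refutesAt_left.2 ⟨hC.1, by simpa using ⟨this, hC.2⟩⟩
  | allr1 G Γ Δ A x a hfr _ ih =>
    intro σ hσ u h
    have hp : a ∉ A.params := fun ha =>
      hfr ⟨(Γ, Δ + {Formula.all x A}), by simp, .inr ⟨Formula.all x A, by simp, ha⟩⟩
    simp only [occursInLNS_append, not_or] at hfr
    obtain ⟨y, hy, v, hyv, hC, -⟩ := refutes_append.1 h
    have hI := (refutesAt_right.1 hC).2 _ (Multiset.mem_singleton_self _)
    simp only [Formula.mapParam, Sat] at hI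
    push Not at hI
    obtain ⟨z, hvz, d, hd, hA⟩ := hI
    have hwz : M.R w z := M.trans hy.rel (M.trans hyv hvz)
    refine ih _ (adm σ hσ a hwz hd) z (refutes_append.2 ⟨y, hy.update d hfr.1, v, hyv,
      (refutesAt_right.1 (hC.update d hfr.2)).1, z, hvz, ?_, rfl⟩)
    simpa [RefutesAt, mapParam_update_substP hp] using hA
  | allr2 G H Γ₁ Δ₁ Γ₂ Δ₂ A x a hfr _ _ ih1 ih2 =>
    intro σ hσ u h
    have hp : a ∉ A.params := fun ha =>
      hfr ⟨(Γ₁, Δ₁ + {Formula.all x A}), by simp, .inr ⟨Formula.all x A, by simp, ha⟩⟩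
    -- Freshness is separated into the two explicit components and the two contexts.
    rw [List.append_assoc, List.cons_append, List.cons_append, List.nil_append,
      List.append_cons _ (_, _), List.append_cons _ (_, _)] at hfr
    simp only [occursInLNS_append, not_or] at hfr
    obtain ⟨⟨⟨hfG, hf1⟩, hf2⟩, hfH⟩ := hfr
    simp only [List.append_assoc, List.cons_append, List.nil_append, refutes_append,
      refutes_cons] at h ih1 ih2
    obtain ⟨s, hs, v, hsv, hC, y, hvy, hy, hH⟩ := h
    have hI := (refutesAt_right.1 hC).2 _ (Multiset.mem_singleton_self _)
    simp only [Formula.mapParam, Sat] at hI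
    push Not at hI
    obtain ⟨z, hvz, d, hd, hA⟩ := hI
    have hwz : M.R w z := M.trans hs.rel (M.trans hsv hvz)
    rcases M.connected hvz hvy with hzy | hyz
    · refine ih1 _ (adm σ hσ a hwz hd) u ⟨s, hs.update d hfG, v, hsv,
        (refutesAt_right.1 (hC.update d hf1)).1, z, hvz, ?_, y, hzy, hy.update d hf2,
        hH.update d hfH⟩
      simpa [RefutesAt, mapParam_update_substP hp] using hA
    · refine ih2 σ hσ u ⟨s, hs, v, hsv, (refutesAt_right.1 hC).1, y, hvy,
        refutesAt_right.2 ⟨hy, ?_⟩, hH⟩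
      simp only [Multiset.mem_singleton, forall_eq, Formula.mapParam, Sat]
      exact fun h => hA (h z hyz d hd)
  | exl G H Γ Δ A x a hfr _ ih =>
    intro σ hσ u h
    have hp : a ∉ A.params := fun ha =>
      hfr ⟨(Γ + {Formula.ex x A}, Δ), by simp, .inl ⟨Formula.ex x A, by simp, ha⟩⟩
    simp only [occursInLNS_append, not_or] at hfr
    simp only [List.append_assoc, List.singleton_append, refutes_append, refutes_cons] at h ih
    obtain ⟨s, hs, v, hsv, hC, hH⟩ := h
    have hE := (refutesAt_left.1 hC).2 _ (Multiset.mem_singleton_self _)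
    simp only [Formula.mapParam, Sat] at hE
    obtain ⟨d, hd, hA⟩ := hE
    refine ih _ (adm σ hσ a (M.trans hs.rel hsv) hd) u ⟨s, hs.update d hfr.1.1, v, hsv,
      refutesAt_left.2 ⟨(refutesAt_left.1 (hC.update d hfr.1.2)).1, ?_⟩, hH.update d hfr.2⟩
    simpa [mapParam_update_substP hp] using hA
  | exr G H Γ Δ A x a _ ih =>
    intro σ hσ u h
    obtain ⟨v, hC, hv, hr⟩ := h.replace
    refine ih σ hσ u (hr _ ?_)
    rw [add_comm {_} Δ, refutesAt_right] at hC ⊢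
    refine ⟨hC.1, ?_⟩
    have hE := hC.2 _ (Multiset.mem_singleton_self _)
    simp only [Formula.mapParam, Sat] at hE
    simp only [Multiset.mem_singleton, forall_eq, Formula.mapParam_substP]
    exact fun h => hE ⟨σ a, M.CD hv ▸ hσ a, h⟩

/-- **Soundness of LNIF.** If a linear nested sequent `G` is derivable in
`LNIF`, then the universal closure of its interpretation `ι(G)` is valid. -/
theorem soundness_LNIF {α : Type} (G : LNS α) (hd : LNIF G) :
    validClosure (interp G) := by
  intro δ M w σ hσ
  exact (sat_interp_iff σ w G).2 (hd.not_refutes M w σ hσ)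
end

section
/- The rule (⊥_r): from 𝒢 ∥ Γ ⊢ Δ, ⊥ ∥ ℋ infer 𝒢 ∥ Γ ⊢ Δ ∥ ℋ, is height-preserving admissible in LNIF: if the premise has an LNIF derivation of height h, then the conclusion has an LNIF derivation of height at most h. -/
/-- `LNIFh h G`: the linear nested sequent `G` has an `LNIF` derivation of
height `h` (the number of sequents on the longest branch). -/
inductive LNIFh {α : Type} : ℕ → LNS α → Prop
  | id1 (G H : LNS α) (Γ Δ : Multiset (Formula α)) (p : ℕ) (ts : List (ℕ ⊕ α)) :
      LNIFh 1 (G ++ [(Γ + {Formula.atom p ts}, {Formula.atom p ts} + Δ)] ++ H)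
  | id2 (G H F : LNS α) (Γ₁ Δ₁ Γ₂ Δ₂ : Multiset (Formula α)) (p : ℕ) (ts : List (ℕ ⊕ α)) :
      LNIFh 1 (G ++ [(Γ₁ + {Formula.atom p ts}, Δ₁)] ++ H ++ [(Γ₂, {Formula.atom p ts} + Δ₂)] ++ F)
  | botl (G H : LNS α) (Γ Δ : Multiset (Formula α)) :
      LNIFh 1 (G ++ [(Γ + {Formula.bot}, Δ)] ++ H)
  | andl (n : ℕ) (G H : LNS α) (Γ Δ : Multiset (Formula α)) (A B : Formula α) :
      LNIFh n (G ++ [(Γ + {A, B}, Δ)] ++ H) →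
      LNIFh (n + 1) (G ++ [(Γ + {A.and B}, Δ)] ++ H)
  | andr (n m : ℕ) (G H : LNS α) (Γ Δ : Multiset (Formula α)) (A B : Formula α) :
      LNIFh n (G ++ [(Γ, Δ + {A})] ++ H) → LNIFh m (G ++ [(Γ, Δ + {B})] ++ H) →
      LNIFh (max n m + 1) (G ++ [(Γ, Δ + {A.and B})] ++ H)
  | orl (n m : ℕ) (G H : LNS α) (Γ Δ : Multiset (Formula α)) (A B : Formula α) :
      LNIFh n (G ++ [(Γ + {A}, Δ)] ++ H) → LNIFh m (G ++ [(Γ + {B}, Δ)] ++ H) →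
      LNIFh (max n m + 1) (G ++ [(Γ + {A.or B}, Δ)] ++ H)
  | orr (n : ℕ) (G H : LNS α) (Γ Δ : Multiset (Formula α)) (A B : Formula α) :
      LNIFh n (G ++ [(Γ, Δ + {A, B})] ++ H) →
      LNIFh (n + 1) (G ++ [(Γ, Δ + {A.or B})] ++ H)
  | impl (n m : ℕ) (G H : LNS α) (Γ Δ : Multiset (Formula α)) (A B : Formula α) :
      LNIFh n (G ++ [(Γ + {B}, Δ)] ++ H) →
      LNIFh m (G ++ [(Γ + {A.imp B}, {A} + Δ)] ++ H) →
      LNIFh (max n m + 1) (G ++ [(Γ + {A.imp B}, Δ)] ++ H)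
  | impr1 (n : ℕ) (G : LNS α) (Γ Δ : Multiset (Formula α)) (A B : Formula α) :
      LNIFh n (G ++ [(Γ, Δ), ({A}, {B})]) →
      LNIFh (n + 1) (G ++ [(Γ, Δ + {A.imp B})])
  | impr2 (n m : ℕ) (G H : LNS α) (Γ₁ Δ₁ Γ₂ Δ₂ : Multiset (Formula α)) (A B : Formula α) :
      LNIFh n (G ++ [(Γ₁, Δ₁), ({A}, {B}), (Γ₂, Δ₂)] ++ H) →
      LNIFh m (G ++ [(Γ₁, Δ₁), (Γ₂, Δ₂ + {A.imp B})] ++ H) →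
      LNIFh (max n m + 1) (G ++ [(Γ₁, Δ₁ + {A.imp B}), (Γ₂, Δ₂)] ++ H)
  | lift (n : ℕ) (G H : LNS α) (Γ₁ Δ₁ Γ₂ Δ₂ : Multiset (Formula α)) (A : Formula α) :
      LNIFh n (G ++ [(Γ₁ + {A}, Δ₁), (Γ₂ + {A}, Δ₂)] ++ H) →
      LNIFh (n + 1) (G ++ [(Γ₁ + {A}, Δ₁), (Γ₂, Δ₂)] ++ H)
  | alll (n : ℕ) (G H : LNS α) (Γ Δ : Multiset (Formula α)) (A : Formula α) (x : ℕ) (a : α) :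
      LNIFh n (G ++ [(Γ + {A.substP a x, Formula.all x A}, Δ)] ++ H) →
      LNIFh (n + 1) (G ++ [(Γ + {Formula.all x A}, Δ)] ++ H)
  | allr1 (n : ℕ) (G : LNS α) (Γ Δ : Multiset (Formula α)) (A : Formula α) (x : ℕ) (a : α) :
      ¬ occursInLNS a (G ++ [(Γ, Δ + {Formula.all x A})]) →
      LNIFh n (G ++ [(Γ, Δ), (0, {A.substP a x})]) →
      LNIFh (n + 1) (G ++ [(Γ, Δ + {Formula.all x A})])
  | allr2 (n m : ℕ) (G H : LNS α) (Γ₁ Δ₁ Γ₂ Δ₂ : Multiset (Formula α)) (A : Formula α) (x : ℕ) (a : α) :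
      ¬ occursInLNS a (G ++ [(Γ₁, Δ₁ + {Formula.all x A}), (Γ₂, Δ₂)] ++ H) →
      LNIFh n (G ++ [(Γ₁, Δ₁), (0, {A.substP a x}), (Γ₂, Δ₂)] ++ H) →
      LNIFh m (G ++ [(Γ₁, Δ₁), (Γ₂, Δ₂ + {Formula.all x A})] ++ H) →
      LNIFh (max n m + 1) (G ++ [(Γ₁, Δ₁ + {Formula.all x A}), (Γ₂, Δ₂)] ++ H)
  | exl (n : ℕ) (G H : LNS α) (Γ Δ : Multiset (Formula α)) (A : Formula α) (x : ℕ) (a : α) :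
      ¬ occursInLNS a (G ++ [(Γ + {Formula.ex x A}, Δ)] ++ H) →
      LNIFh n (G ++ [(Γ + {A.substP a x}, Δ)] ++ H) →
      LNIFh (n + 1) (G ++ [(Γ + {Formula.ex x A}, Δ)] ++ H)
  | exr (n : ℕ) (G H : LNS α) (Γ Δ : Multiset (Formula α)) (A : Formula α) (x : ℕ) (a : α) :
      LNIFh n (G ++ [(Γ, {A.substP a x} + Δ)] ++ H) →
      LNIFh (n + 1) (G ++ [(Γ, {Formula.ex x A} + Δ)] ++ H)

/-! ### Deleting `⊥` from right-hand sides -/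

/-- `EraseBot C C'`: the component `C'` arises from `C` by deleting some number (possibly zero) of
copies of `⊥` from the right-hand side. -/
def EraseBot {α : Type} (C C' : Multiset (Formula α) × Multiset (Formula α)) : Prop :=
  C'.1 = C.1 ∧ ∃ k : ℕ, C.2 = C'.2 + Multiset.replicate k Formula.bot

/-- Componentwise `EraseBot` on linear nested sequents. -/
abbrev EraseBots {α : Type} (G G' : LNS α) : Prop := List.Forall₂ EraseBot G G'

section

variable {α : Type}

theorem EraseBot.refl (C : Multiset (Formula α) × Multiset (Formula α)) : EraseBot C C :=
  ⟨rfl, 0, by simp⟩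

theorem EraseBots.refl (G : LNS α) : EraseBots G G :=
  List.forall₂_same.2 fun C _ => EraseBot.refl C

/-- Only the right-hand sides matter, and the same formulas may be added to both of them. -/
theorem EraseBot.add {Γ Δ Δ' : Multiset (Formula α)} (h : EraseBot (Γ, Δ) (Γ, Δ'))
    (Γ' Θ : Multiset (Formula α)) : EraseBot (Γ', Δ + Θ) (Γ', Δ' + Θ) := by
  obtain ⟨-, k, hk⟩ := h
  refine ⟨rfl, k, ?_⟩
  simp only at hk ⊢
  rw [hk, add_right_comm]

theorem EraseBot.left {Γ Δ Δ' : Multiset (Formula α)} (h : EraseBot (Γ, Δ) (Γ, Δ'))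
    (Γ' : Multiset (Formula α)) : EraseBot (Γ', Δ) (Γ', Δ') :=
  ⟨rfl, h.2⟩

theorem EraseBot.fst {Γ Δ : Multiset (Formula α)} {C : Multiset (Formula α) × Multiset (Formula α)}
    (h : EraseBot (Γ, Δ) C) : ∃ Δ', C = (Γ, Δ') ∧ EraseBot (Γ, Δ) (Γ, Δ') := by
  obtain ⟨Γ', Δ'⟩ := C
  obtain ⟨rfl, hk⟩ := h
  exact ⟨Δ', rfl, rfl, hk⟩

/-- A formula other than `⊥` on the right-hand side is not affected by deleting copies of `⊥`. -/
theorem EraseBot.inv {Γ Δ : Multiset (Formula α)} {A : Formula α}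
    {C : Multiset (Formula α) × Multiset (Formula α)} (hA : A ≠ Formula.bot)
    (h : EraseBot (Γ, Δ + {A}) C) :
    ∃ Δ', C = (Γ, Δ' + {A}) ∧ EraseBot (Γ, Δ) (Γ, Δ') := by
  obtain ⟨Θ, rfl, -, k, hk⟩ := h.fst
  simp only at hk
  have hmem : A ∈ Θ := by
    have h1 : A ∈ Θ + Multiset.replicate k Formula.bot := by simp [← hk]
    rcases Multiset.mem_add.1 h1 with h1 | h1
    · exact h1
    · exact absurd (Multiset.eq_of_mem_replicate h1) hA
  obtain ⟨Δ', rfl⟩ := Multiset.exists_cons_of_mem hmem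
  refine ⟨Δ', by rw [add_comm, Multiset.singleton_add], rfl, k, ?_⟩
  rw [add_comm, Multiset.singleton_add, Multiset.cons_add] at hk
  exact (Multiset.cons_inj_right A).1 hk

theorem EraseBots.append {G G' H H' : LNS α} (hG : EraseBots G G') (hH : EraseBots H H') :
    EraseBots (G ++ H) (G' ++ H') :=
  List.rel_append hG hH

theorem EraseBots.append_inv {G H L : LNS α} (h : EraseBots (G ++ H) L) :
    ∃ G' H', L = G' ++ H' ∧ EraseBots G G' ∧ EraseBots H H' := by
  induction G generalizing L with
  | nil => exact ⟨[], L, rfl, .nil, h⟩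
  | cons C G ih =>
    cases h with
    | cons hC hL =>
      obtain ⟨G', H', rfl, hG, hH⟩ := ih hL
      exact ⟨_ :: G', H', rfl, .cons hC hG, hH⟩

theorem EraseBots.one {C C' : Multiset (Formula α) × Multiset (Formula α)} (h : EraseBot C C') :
    EraseBots [C] [C'] :=
  .cons h .nil

theorem EraseBots.one_inv {G H L : LNS α} {C : Multiset (Formula α) × Multiset (Formula α)}
    (h : EraseBots (G ++ [C] ++ H) L) :
    ∃ G' C' H', L = G' ++ [C'] ++ H' ∧ EraseBots G G' ∧ EraseBot C C' ∧ EraseBots H H' := by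
  obtain ⟨K, H', rfl, hK, hH⟩ := h.append_inv
  obtain ⟨G', M, rfl, hG, hM⟩ := hK.append_inv
  cases hM with
  | cons hC hN =>
    cases hN
    exact ⟨G', _, H', rfl, hG, hC, hH⟩

theorem EraseBots.two_inv {G H L : LNS α} {C D : Multiset (Formula α) × Multiset (Formula α)}
    (h : EraseBots (G ++ [C, D] ++ H) L) :
    ∃ G' C' D' H', L = G' ++ [C', D'] ++ H' ∧
      EraseBots G G' ∧ EraseBot C C' ∧ EraseBot D D' ∧ EraseBots H H' := by
  obtain ⟨K, H', rfl, hK, hH⟩ := h.append_inv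
  obtain ⟨G', M, rfl, hG, hM⟩ := hK.append_inv
  cases hM with
  | cons hC hN =>
    cases hN with
    | cons hD hN =>
      cases hN
      exact ⟨G', _, _, H', rfl, hG, hC, hD, hH⟩

/-- Deletion creates no new parameters, so eigenvariable conditions are preserved. -/
theorem EraseBots.fresh {G G' : LNS α} {a : α} (h : EraseBots G G') (ha : ¬ occursInLNS a G) :
    ¬ occursInLNS a G' := by
  induction h with
  | nil => exact ha
  | @cons C C' G G' hC _ ih =>
    rintro ⟨D, hD, hB⟩
    rcases List.mem_cons.1 hD with rfl | hD
    · refine ha ⟨C, by simp, ?_⟩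
      obtain ⟨h1, k, h2⟩ := hC
      rcases hB with ⟨B, hB, hp⟩ | ⟨B, hB, hp⟩
      · exact Or.inl ⟨B, h1 ▸ hB, hp⟩
      · exact Or.inr ⟨B, h2 ▸ Multiset.mem_add.2 (Or.inl hB), hp⟩
    · exact ih (fun ⟨E, hE, h⟩ => ha ⟨E, List.mem_cons_of_mem _ hE, h⟩) ⟨D, hD, hB⟩

/-! ### Deletion preserves derivability -/

/-- Deleting copies of `⊥` from right-hand sides preserves derivability with the same height. -/
theorem LNIFh.erase {h : ℕ} {G L : LNS α} (hd : LNIFh h G) (hL : EraseBots G L) :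
    LNIFh h L := by
  induction hd generalizing L with
  | id1 G H Γ Δ p ts =>
    obtain ⟨G', C, H', rfl, -, hC, -⟩ := hL.one_inv
    rw [add_comm {_} Δ] at hC
    obtain ⟨Δ', rfl, -⟩ := hC.inv (by simp)
    rw [add_comm Δ']
    exact .id1 ..
  | id2 G H F Γ₁ Δ₁ Γ₂ Δ₂ p ts =>
    obtain ⟨K, D, F', rfl, hK, hD, -⟩ := hL.one_inv
    obtain ⟨G', C, H', rfl, -, hC, -⟩ := hK.one_inv
    obtain ⟨Δ₁', rfl, -⟩ := hC.fst
    rw [add_comm {_} Δ₂] at hD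
    obtain ⟨Δ₂', rfl, -⟩ := hD.inv (by simp)
    rw [add_comm Δ₂']
    exact .id2 ..
  | botl G H Γ Δ =>
    obtain ⟨G', C, H', rfl, -, hC, -⟩ := hL.one_inv
    obtain ⟨Δ', rfl, -⟩ := hC.fst
    exact .botl ..
  | andl n G H Γ Δ A B _ ih =>
    obtain ⟨G', C, H', rfl, hG, hC, hH⟩ := hL.one_inv
    obtain ⟨Δ', rfl, hE⟩ := hC.fst
    exact .andl _ _ _ _ _ _ _ (ih ((hG.append (.one (hE.left _))).append hH))
  | andr n m G H Γ Δ A B _ _ ih₁ ih₂ =>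
    obtain ⟨G', C, H', rfl, hG, hC, hH⟩ := hL.one_inv
    obtain ⟨Δ', rfl, hE⟩ := hC.inv (by simp)
    exact .andr _ _ _ _ _ _ _ _ (ih₁ ((hG.append (.one (hE.add _ _))).append hH))
      (ih₂ ((hG.append (.one (hE.add _ _))).append hH))
  | orl n m G H Γ Δ A B _ _ ih₁ ih₂ =>
    obtain ⟨G', C, H', rfl, hG, hC, hH⟩ := hL.one_inv
    obtain ⟨Δ', rfl, hE⟩ := hC.fst
    exact .orl _ _ _ _ _ _ _ _ (ih₁ ((hG.append (.one (hE.left _))).append hH))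
      (ih₂ ((hG.append (.one (hE.left _))).append hH))
  | orr n G H Γ Δ A B _ ih =>
    obtain ⟨G', C, H', rfl, hG, hC, hH⟩ := hL.one_inv
    obtain ⟨Δ', rfl, hE⟩ := hC.inv (by simp)
    exact .orr _ _ _ _ _ _ _ (ih ((hG.append (.one (hE.add _ _))).append hH))
  | impl n m G H Γ Δ A B _ _ ih₁ ih₂ =>
    obtain ⟨G', C, H', rfl, hG, hC, hH⟩ := hL.one_inv
    obtain ⟨Δ', rfl, hE⟩ := hC.fst
    refine .impl _ _ _ _ _ _ _ _ (ih₁ ((hG.append (.one (hE.left _))).append hH))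
      (ih₂ ((hG.append (.one ?_)).append hH))
    rw [add_comm {A} Δ, add_comm {A} Δ']
    exact hE.add _ _
  | impr1 n G Γ Δ A B _ ih =>
    obtain ⟨G', M, rfl, hG, hM⟩ := hL.append_inv
    obtain ⟨C, N, hC, hN, rfl⟩ := List.forall₂_cons_left_iff.1 hM
    cases hN
    obtain ⟨Δ', rfl, hE⟩ := hC.inv (by simp)
    exact .impr1 _ _ _ _ _ _ (ih (hG.append (.cons hE (EraseBots.refl _))))
  | impr2 n m G H Γ₁ Δ₁ Γ₂ Δ₂ A B _ _ ih₁ ih₂ =>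
    obtain ⟨G', C, D, H', rfl, hG, hC, hD, hH⟩ := hL.two_inv
    obtain ⟨Δ₁', rfl, hE⟩ := hC.inv (by simp)
    obtain ⟨Δ₂', rfl, hF⟩ := hD.fst
    exact .impr2 _ _ _ _ _ _ _ _ _ _
      (ih₁ ((hG.append (.cons hE (.cons (.refl _) (EraseBots.one hF)))).append hH))
      (ih₂ ((hG.append (.cons hE (EraseBots.one (hF.add _ _)))).append hH))
  | lift n G H Γ₁ Δ₁ Γ₂ Δ₂ A _ ih =>
    obtain ⟨G', C, D, H', rfl, hG, hC, hD, hH⟩ := hL.two_inv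
    obtain ⟨Δ₁', rfl, hE⟩ := hC.fst
    obtain ⟨Δ₂', rfl, hF⟩ := hD.fst
    exact .lift _ _ _ _ _ _ _ _ (ih ((hG.append (.cons hE (EraseBots.one (hF.left _)))).append hH))
  | alll n G H Γ Δ A x a _ ih =>
    obtain ⟨G', C, H', rfl, hG, hC, hH⟩ := hL.one_inv
    obtain ⟨Δ', rfl, hE⟩ := hC.fst
    exact .alll _ _ _ _ _ _ _ a (ih ((hG.append (.one (hE.left _))).append hH))
  | allr1 n G Γ Δ A x a ha _ ih =>
    have ha' := hL.fresh ha
    obtain ⟨G', M, rfl, hG, hM⟩ := hL.append_inv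
    obtain ⟨C, N, hC, hN, rfl⟩ := List.forall₂_cons_left_iff.1 hM
    cases hN
    obtain ⟨Δ', rfl, hE⟩ := hC.inv (by simp)
    exact .allr1 _ _ _ _ _ _ a ha' (ih (hG.append (.cons hE (EraseBots.refl _))))
  | allr2 n m G H Γ₁ Δ₁ Γ₂ Δ₂ A x a ha _ _ ih₁ ih₂ =>
    have ha' := hL.fresh ha
    obtain ⟨G', C, D, H', rfl, hG, hC, hD, hH⟩ := hL.two_inv
    obtain ⟨Δ₁', rfl, hE⟩ := hC.inv (by simp)
    obtain ⟨Δ₂', rfl, hF⟩ := hD.fst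
    exact .allr2 _ _ _ _ _ _ _ _ _ _ a ha'
      (ih₁ ((hG.append (.cons hE (.cons (.refl _) (EraseBots.one hF)))).append hH))
      (ih₂ ((hG.append (.cons hE (EraseBots.one (hF.add _ _)))).append hH))
  | exl n G H Γ Δ A x a ha _ ih =>
    have ha' := hL.fresh ha
    obtain ⟨G', C, H', rfl, hG, hC, hH⟩ := hL.one_inv
    obtain ⟨Δ', rfl, hE⟩ := hC.fst
    exact .exl _ _ _ _ _ _ _ a ha' (ih ((hG.append (.one (hE.left _))).append hH))
  | exr n G H Γ Δ A x a _ ih =>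
    obtain ⟨G', C, H', rfl, hG, hC, hH⟩ := hL.one_inv
    rw [add_comm {_} Δ] at hC
    obtain ⟨Δ', rfl, hE⟩ := hC.inv (by simp)
    rw [add_comm Δ']
    refine .exr _ _ _ _ _ _ _ a (ih ((hG.append (.one ?_)).append hH))
    rw [add_comm _ Δ, add_comm _ Δ']
    exact hE.add _ _

end

/-- **hp-admissibility of `(⊥_r)`.** If `𝒢 ∥ Γ ⊢ Δ, ⊥ ∥ ℋ` has an `LNIF`
derivation of height `h`, then `𝒢 ∥ Γ ⊢ Δ ∥ ℋ` has one of height at most `h`. -/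
theorem botr_hp_admissible {α : Type} (G H : LNS α)
    (Γ Δ : Multiset (Formula α)) (h : ℕ)
    (hd : LNIFh h (G ++ [(Γ, Δ + {Formula.bot})] ++ H)) :
    ∃ h' ≤ h, LNIFh h' (G ++ [(Γ, Δ)] ++ H) := by
  have hbot : EraseBot (Γ, Δ + {Formula.bot}) (Γ, Δ) := ⟨rfl, 1, by simp⟩
  exact ⟨h, le_rfl, hd.erase (((EraseBots.refl G).append (.one hbot)).append (.refl H))⟩
end

section
/- The lowering rule (lwr): from 𝒢 ∥ Γ₁ ⊢ A, Δ₁ ∥ Γ₂ ⊢ Δ₂ ∥ ℋ infer 𝒢 ∥ Γ₁ ⊢ Δ₁ ∥ Γ₂ ⊢ A, Δ₂ ∥ ℋ, is height-preserving admissible in LNIF: if the premise has an LNIF derivation of height h, then the conclusion has an LNIF derivation of height at most h. -/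
/-! ### The one-step lowering relation -/

/-- `Low A S T`: the sequent `T` arises from `S` by moving one occurrence of `A` on the
right-hand side of some component to the right-hand side of the next component. -/
inductive Low {α : Type} (A : Formula α) : LNS α → LNS α → Prop
  | here (Γ₁ Δ₁ Γ₂ Δ₂ : Multiset (Formula α)) (H : LNS α) :
      Low A ((Γ₁, Δ₁ + {A}) :: (Γ₂, Δ₂) :: H) ((Γ₁, Δ₁) :: (Γ₂, Δ₂ + {A}) :: H)
  | there (X : Multiset (Formula α) × Multiset (Formula α)) {S T : LNS α} :
      Low A S T → Low A (X :: S) (X :: T)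

namespace Low

variable {α : Type} {A : Formula α}

theorem append_left {S T : LNS α} (G : LNS α) (h : Low A S T) : Low A (G ++ S) (G ++ T) := by
  induction G with
  | nil => exact h
  | cons X G ih => exact .there X ih

theorem append_right {S T : LNS α} (h : Low A S T) (H : LNS α) : Low A (S ++ H) (T ++ H) := by
  induction h with
  | here => exact .here ..
  | there X _ ih => exact .there X ih

theorem at_focus (G H : LNS α) (Γ₁ Δ₁ Γ₂ Δ₂ : Multiset (Formula α)) :
    Low A (G ++ [(Γ₁, Δ₁ + {A}), (Γ₂, Δ₂)] ++ H) (G ++ [(Γ₁, Δ₁), (Γ₂, Δ₂ + {A})] ++ H) := by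
  simpa using append_left G (.here Γ₁ Δ₁ Γ₂ Δ₂ H)

theorem length_eq {S T : LNS α} (h : Low A S T) : S.length = T.length := by
  induction h with
  | here => rfl
  | there X _ ih => simp [ih]

theorem occurs_cons {a : α} {Γ Δ : Multiset (Formula α)} {S : LNS α} :
    occursInLNS a ((Γ, Δ) :: S) ↔
      (∃ B ∈ Γ, a ∈ B.params) ∨ (∃ B ∈ Δ, a ∈ B.params) ∨ occursInLNS a S := by
  simp only [occursInLNS, List.mem_cons, exists_eq_or_imp, or_assoc]

/-- Lowering introduces no parameters, so eigenvariable conditions survive it. -/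
theorem not_occurs {S T : LNS α} (h : Low A S T) {a : α} (ha : ¬ occursInLNS a S) :
    ¬ occursInLNS a T := by
  induction h with
  | here =>
    simp only [occurs_cons, Multiset.mem_add, exists_or, or_and_right, not_or] at ha ⊢
    exact ⟨ha.1, ha.2.1.1, ha.2.2.1, ⟨ha.2.2.2.1, ha.2.1.2⟩, ha.2.2.2.2⟩
  | there X _ ih =>
    obtain ⟨Γ, Δ⟩ := X
    simp only [occurs_cons, not_or] at ha ⊢
    exact ⟨ha.1, ha.2.1, ih ha.2.2⟩

end Low

/-! ### Initial sequents -/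

/-- `AxAt q S`: the formula `q` occurs on the left of some component of `S` and on the right
of the same or a later component. For atomic `q` this covers both forms of axiom. -/
def AxAt {α : Type} (q : Formula α) : LNS α → Prop
  | [] => False
  | C :: H => (q ∈ C.1 ∧ ∃ D ∈ C :: H, q ∈ D.2) ∨ AxAt q H

section Axioms

variable {α : Type} {A : Formula α}

theorem AxAt.append_left {q : Formula α} {S : LNS α} (G : LNS α) (h : AxAt q S) :
    AxAt q (G ++ S) := by
  induction G with
  | nil => exact h
  | cons X G ih => exact Or.inr ih

theorem AxAt.low {q : Formula α} {S T : LNS α} (h : Low A S T) (hS : AxAt q S) : AxAt q T := by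
  have right : ∀ {S T : LNS α}, Low A S T → (∃ D ∈ S, q ∈ D.2) → ∃ D ∈ T, q ∈ D.2 := by
    intro S T h hS
    induction h with
    | here =>
      simp only [List.mem_cons, exists_eq_or_imp, Multiset.mem_add] at hS ⊢
      grind
    | there X _ ih =>
      simp only [List.mem_cons, exists_eq_or_imp] at hS ⊢
      grind
  induction h with
  | here =>
    simp only [AxAt, List.mem_cons, exists_eq_or_imp, Multiset.mem_add] at hS ⊢
    grind
  | there X h ih =>
    have := right h
    simp only [AxAt, List.mem_cons, exists_eq_or_imp] at hS ⊢
    grind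

theorem AxAt.exists_split {q : Formula α} {S : LNS α} (h : AxAt q S) :
    ∃ G C H, S = G ++ C :: H ∧ q ∈ C.1 ∧ ∃ D ∈ C :: H, q ∈ D.2 := by
  induction S with
  | nil => exact h.elim
  | cons X S ih =>
    rcases h with h | h
    · exact ⟨[], X, S, rfl, h⟩
    · obtain ⟨G, C, H, rfl, h'⟩ := ih h
      exact ⟨X :: G, C, H, rfl, h'⟩

theorem AxAt.derivable {p : ℕ} {ts : List (ℕ ⊕ α)} {S : LNS α}
    (h : AxAt (Formula.atom p ts) S) : LNIFh 1 S := by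
  obtain ⟨G, ⟨Γ, Δ⟩, H, rfl, hl, D, hD, hr⟩ := h.exists_split
  obtain ⟨Γ, rfl⟩ := Multiset.exists_cons_of_mem hl
  rcases List.mem_cons.1 hD with rfl | hD
  · obtain ⟨Δ, rfl⟩ := Multiset.exists_cons_of_mem hr
    simpa [add_comm Γ] using LNIFh.id1 G H Γ Δ p ts
  · obtain ⟨H, F, rfl⟩ := List.append_of_mem hD
    obtain ⟨Γ₂, Δ₂⟩ := D
    obtain ⟨Δ₂, rfl⟩ := Multiset.exists_cons_of_mem hr
    simpa [add_comm Γ] using LNIFh.id2 G H F Γ Δ Γ₂ Δ₂ p ts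

theorem botl_of_mem {S : LNS α} (h : ∃ C ∈ S, Formula.bot ∈ C.1) : LNIFh 1 S := by
  obtain ⟨⟨Γ, Δ⟩, hC, hb⟩ := h
  obtain ⟨G, H, rfl⟩ := List.append_of_mem hC
  obtain ⟨Γ, rfl⟩ := Multiset.exists_cons_of_mem hb
  simpa [add_comm Γ] using LNIFh.botl G H Γ Δ

theorem Low.bot_mem {S T : LNS α} (h : Low A S T) (hS : ∃ C ∈ S, Formula.bot ∈ C.1) :
    ∃ C ∈ T, Formula.bot ∈ C.1 := by
  induction h with
  | here => simpa using hS
  | there X _ ih =>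
    simp only [List.mem_cons, exists_eq_or_imp] at hS ⊢
    grind

end Axioms

/-! ### Lowering relative to the principal component of a rule -/

section Focus

variable {α : Type} {A : Formula α}

/-- If `Q` has at most one element, a formula occurring in `Δ + Q` either occurs in `Δ` or
is all of `Q`. -/
theorem split_focus {Δ Q Δ₁ : Multiset (Formula α)} (hQ : Q.card ≤ 1)
    (h : Δ + Q = Δ₁ + {A}) : (∃ Δ', Δ = Δ' + {A} ∧ Δ₁ = Δ' + Q) ∨ (Q = {A} ∧ Δ₁ = Δ) := by
  have hA : A ∈ Δ + Q := by simp [h]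
  rcases Multiset.mem_add.1 hA with hA | hA
  · left
    obtain ⟨Δ', rfl⟩ := Multiset.exists_cons_of_mem hA
    refine ⟨Δ', by rw [add_comm, Multiset.singleton_add], ?_⟩
    have : Δ' + Q + {A} = Δ₁ + {A} := by rw [← h, ← Multiset.singleton_add]; abel
    exact (add_right_cancel this).symm
  · right
    obtain ⟨Q', rfl⟩ := Multiset.exists_cons_of_mem hA
    have : Q' = 0 := by
      rw [← Multiset.card_eq_zero]
      simp at hQ
      simp [hQ]
    subst this
    exact ⟨rfl, (add_right_cancel h).symm⟩

/-- Lowering in a sequent with a distinguished component whose right-hand side has a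
principal part `Q` of at most one formula: either the move leaves `Q` alone, and then it can be
performed uniformly for any other left-hand side and any other `Q'`, or it moves the formula
of `Q` itself. By the equality of lengths, the distinguished component keeps its place. -/
theorem Low.focus {G H T : LNS α} {Γ Δ Q : Multiset (Formula α)} (hQ : Q.card ≤ 1)
    (h : Low A (G ++ [(Γ, Δ + Q)] ++ H) T) :
    (∃ G' H' Δ', T = G' ++ [(Γ, Δ' + Q)] ++ H' ∧ H'.length = H.length ∧
      ∀ Γ' Q', Low A (G ++ [(Γ', Δ + Q')] ++ H) (G' ++ [(Γ', Δ' + Q')] ++ H')) ∨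
    (Q = {A} ∧ ∃ Γ₂ Δ₂ H₂, H = (Γ₂, Δ₂) :: H₂ ∧
      T = G ++ [(Γ, Δ), (Γ₂, Δ₂ + {A})] ++ H₂) := by
  induction G generalizing T with
  | nil =>
    simp only [List.nil_append, List.cons_append] at h
    generalize hD : Δ + Q = D at h
    cases h with
    | here _ Δ₁ Γ₂ Δ₂ H =>
      rcases split_focus hQ hD with ⟨Δ', rfl, rfl⟩ | ⟨rfl, rfl⟩
      · refine Or.inl ⟨[], (Γ₂, Δ₂ + {A}) :: H, Δ', rfl, rfl, fun Γ' Q' => ?_⟩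
        rw [add_right_comm]
        exact .here ..
      · exact Or.inr ⟨rfl, Γ₂, Δ₂, H, rfl, rfl⟩
    | there _ h =>
      subst hD
      exact Or.inl ⟨[], _, Δ, rfl, h.length_eq.symm, fun Γ' Q' => .there _ h⟩
  | cons X G ih =>
    rw [List.cons_append, List.cons_append] at h
    generalize hS : G ++ [(Γ, Δ + Q)] ++ H = S at h
    cases h with
    | here Γ₁ Δ₁ Γ₂ Δ₂ K =>
      left
      cases G with
      | nil =>
        simp only [List.nil_append, List.cons_append, List.cons.injEq, Prod.mk.injEq] at hS
        obtain ⟨⟨rfl, rfl⟩, rfl⟩ := hS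
        refine ⟨[(Γ₁, Δ₁)], H, Δ + {A}, by simp [add_right_comm], rfl, fun Γ' Q' => ?_⟩
        rw [add_right_comm]
        exact .here ..
      | cons Y G =>
        simp only [List.cons_append, List.cons.injEq] at hS
        obtain ⟨rfl, rfl⟩ := hS
        exact ⟨(Γ₁, Δ₁) :: (Γ₂, Δ₂ + {A}) :: G, H, Δ, rfl, rfl, fun Γ' Q' => .here ..⟩
    | there _ h =>
      subst hS
      rcases ih h with ⟨G', H', Δ', rfl, hlen, h'⟩ | ⟨hA, Γ₂, Δ₂, H₂, rfl, rfl⟩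
      · exact Or.inl ⟨X :: G', H', Δ', rfl, hlen, fun Γ' Q' => .there X (h' Γ' Q')⟩
      · exact Or.inr ⟨hA, Γ₂, Δ₂, H₂, rfl, rfl⟩

/-- The variant of `Low.focus` for rules acting on the left-hand side. -/
theorem Low.focus_left {G H T : LNS α} {Γ Δ : Multiset (Formula α)}
    (h : Low A (G ++ [(Γ, Δ)] ++ H) T) :
    ∃ G' H' Δ', T = G' ++ [(Γ, Δ')] ++ H' ∧
      (∀ Γ', Low A (G ++ [(Γ', Δ)] ++ H) (G' ++ [(Γ', Δ')] ++ H')) ∧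
      ∀ Γ' Q', Low A (G ++ [(Γ', Δ + Q')] ++ H) (G' ++ [(Γ', Δ' + Q')] ++ H') := by
  rw [← add_zero Δ] at h
  rcases h.focus (by simp) with ⟨G', H', Δ', rfl, -, h'⟩ | ⟨hA, -⟩
  · exact ⟨G', H', Δ', by simp, fun Γ' => by simpa using h' Γ' 0, h'⟩
  · exact absurd hA.symm (Multiset.singleton_ne_zero A)

/-- Lowering in a sequent with two distinguished adjacent components, the first of which has
a principal part `Q`. When the move leaves `Q` alone, it can also be performed after a new
component `X` has been inserted between the two; this may take two steps, one into `X` and one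
out of it. -/
theorem Low.focus₂ {G H T : LNS α} {Γ₁ Δ₁ Γ₂ Δ₂ Q : Multiset (Formula α)} (hQ : Q.card ≤ 1)
    (h : Low A (G ++ [(Γ₁, Δ₁ + Q), (Γ₂, Δ₂)] ++ H) T) :
    (∃ G' H' Δ₁' Δ₂', T = G' ++ [(Γ₁, Δ₁' + Q), (Γ₂, Δ₂')] ++ H' ∧
      (∀ Γ₁' Γ₂' Q₁ Q₂, Low A (G ++ [(Γ₁', Δ₁ + Q₁), (Γ₂', Δ₂ + Q₂)] ++ H)
        (G' ++ [(Γ₁', Δ₁' + Q₁), (Γ₂', Δ₂' + Q₂)] ++ H')) ∧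
      ∀ X, Relation.ReflTransGen (Low A) (G ++ [(Γ₁, Δ₁), X, (Γ₂, Δ₂)] ++ H)
        (G' ++ [(Γ₁, Δ₁'), X, (Γ₂, Δ₂')] ++ H')) ∨
    (Q = {A} ∧ T = G ++ [(Γ₁, Δ₁), (Γ₂, Δ₂ + {A})] ++ H) := by
  induction G generalizing T with
  | nil =>
    simp only [List.nil_append, List.cons_append] at h
    generalize hD : Δ₁ + Q = D at h
    cases h with
    | here _ Δ _ _ H =>
      rcases split_focus hQ hD with ⟨Δ', rfl, rfl⟩ | ⟨rfl, rfl⟩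
      · refine Or.inl ⟨[], H, Δ', Δ₂ + {A}, rfl, fun Γ₁' Γ₂' Q₁ Q₂ => ?_, fun X => ?_⟩
        · rw [add_right_comm, add_right_comm Δ₂]
          exact .here ..
        · exact (Relation.ReflTransGen.single (.here ..)).tail (.there _ (.here ..))
      · exact Or.inr ⟨rfl, rfl⟩
    | there _ h =>
      subst hD
      left
      cases h with
      | here _ Δ Γ₃ Δ₃ K =>
        refine ⟨[], (Γ₃, Δ₃ + {A}) :: K, Δ₁, Δ, rfl, fun Γ₁' Γ₂' Q₁ Q₂ => ?_,
          fun X => .single (.there _ (.there _ (.here ..)))⟩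
        refine .there _ ?_
        rw [add_right_comm]
        exact .here ..
      | there _ h =>
        exact ⟨[], _, Δ₁, Δ₂, rfl, fun Γ₁' Γ₂' Q₁ Q₂ => .there _ (.there _ h),
          fun X => .single (.there _ (.there _ (.there _ h)))⟩
  | cons X G ih =>
    rw [List.cons_append, List.cons_append] at h
    generalize hS : G ++ [(Γ₁, Δ₁ + Q), (Γ₂, Δ₂)] ++ H = S at h
    cases h with
    | here Γ₀ Δ₀ Γ Δ K =>
      left
      cases G with
      | nil =>
        simp only [List.nil_append, List.cons_append, List.cons.injEq, Prod.mk.injEq] at hS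
        obtain ⟨⟨rfl, rfl⟩, rfl⟩ := hS
        refine ⟨[(Γ₀, Δ₀)], H, Δ₁ + {A}, Δ₂, by simp [add_right_comm],
          fun Γ₁' Γ₂' Q₁ Q₂ => ?_, fun X => .single (.here ..)⟩
        rw [add_right_comm]
        exact .here ..
      | cons Y G =>
        simp only [List.cons_append, List.cons.injEq] at hS
        obtain ⟨rfl, rfl⟩ := hS
        exact ⟨(Γ₀, Δ₀) :: (Γ, Δ + {A}) :: G, H, Δ₁, Δ₂, rfl, fun Γ₁' Γ₂' Q₁ Q₂ => .here ..,
          fun X => .single (.here ..)⟩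
    | there _ h =>
      subst hS
      rcases ih h with ⟨G', H', Δ₁', Δ₂', rfl, h', h''⟩ | ⟨hA, rfl⟩
      · exact Or.inl ⟨X :: G', H', Δ₁', Δ₂', rfl, fun Γ₁' Γ₂' Q₁ Q₂ => .there X (h' ..),
          fun Y => (h'' Y).lift (X :: ·) fun _ _ => .there X⟩
      · exact Or.inr ⟨hA, rfl⟩

/-- The variant of `Low.focus` for rules whose principal formula lies in the last component:
that formula itself cannot be lowered, and a new last component can be appended. -/
theorem Low.focus_last {G T : LNS α} {Γ Δ : Multiset (Formula α)} {B : Formula α}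
    (h : Low A (G ++ [(Γ, Δ + {B})]) T) :
    ∃ G' Δ', T = G' ++ [(Γ, Δ' + {B})] ∧
      ∀ X, Low A (G ++ [(Γ, Δ), X]) (G' ++ [(Γ, Δ'), X]) := by
  rw [← List.append_nil (G ++ _)] at h
  rcases h.focus (by simp) with ⟨G', H', Δ', rfl, hlen, h'⟩ | ⟨-, _, _, _, h, -⟩
  · obtain rfl : H' = [] := by simpa using hlen
    exact ⟨G', Δ', by simp, fun X => by simpa using (h' Γ 0).append_right [X]⟩
  · exact absurd h (by simp)

end Focus

/-! ### The induction on the height -/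

/-- One step of lowering does not increase the height of a derivation. -/
theorem LNIFh.low {α : Type} {n : ℕ} {S T : LNS α} {A : Formula α} (hd : LNIFh n S)
    (hl : Low A S T) : ∃ h' ≤ n, LNIFh h' T := by
  induction n using Nat.strong_induction_on generalizing S T A with
  | _ n ih =>
  -- Because heights do not grow, the induction hypothesis may be used repeatedly.
  have ihs : ∀ m < n, ∀ {A : Formula α} {S T : LNS α}, LNIFh m S →
      Relation.ReflTransGen (Low A) S T → ∃ h' ≤ m, LNIFh h' T := by
    intro m hm A S T hd h
    induction h with
    | refl => exact ⟨m, le_rfl, hd⟩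
    | tail _ h ih' =>
      obtain ⟨k, hk, hd⟩ := ih'
      obtain ⟨l, hl, hd⟩ := ih k (by omega) hd h
      exact ⟨l, by omega, hd⟩
  cases hd with
  | id1 G H Γ Δ p ts =>
    refine ⟨1, le_rfl, AxAt.derivable (p := p) (ts := ts) (.low hl ?_)⟩
    simp only [List.append_assoc]
    exact AxAt.append_left G (Or.inl ⟨by simp, _, List.mem_cons_self, by simp⟩)
  | id2 G H F Γ₁ Δ₁ Γ₂ Δ₂ p ts =>
    refine ⟨1, le_rfl, AxAt.derivable (p := p) (ts := ts) (.low hl ?_)⟩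
    simp only [List.append_assoc]
    exact AxAt.append_left G
      (Or.inl ⟨by simp, (Γ₂, {Formula.atom p ts} + Δ₂), by simp, by simp⟩)
  | botl G H Γ Δ =>
    exact ⟨1, le_rfl, botl_of_mem (hl.bot_mem ⟨(Γ + {Formula.bot}, Δ), by simp, by simp⟩)⟩
  | andl m G H Γ Δ B C h =>
    obtain ⟨G', H', Δ', rfl, h', -⟩ := hl.focus_left
    obtain ⟨k, hk, h⟩ := ih m (by omega) h (h' _)
    exact ⟨k + 1, by omega, .andl _ _ _ _ _ _ _ h⟩
  | andr m₁ m₂ G H Γ Δ B C h₁ h₂ =>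
    rcases hl.focus (by simp) with ⟨G', H', Δ', rfl, -, h'⟩ | ⟨hA, Γ₂, Δ₂, H₂, rfl, rfl⟩
    · obtain ⟨k₁, hk₁, h₁⟩ := ih m₁ (by omega) h₁ (h' ..)
      obtain ⟨k₂, hk₂, h₂⟩ := ih m₂ (by omega) h₂ (h' ..)
      exact ⟨max k₁ k₂ + 1, by omega, .andr _ _ _ _ _ _ _ _ h₁ h₂⟩
    · obtain rfl := Multiset.singleton_inj.1 hA
      obtain ⟨k₁, hk₁, h₁⟩ := ih m₁ (by omega) h₁ (by simpa using Low.at_focus G H₂ Γ Δ Γ₂ Δ₂)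
      obtain ⟨k₂, hk₂, h₂⟩ := ih m₂ (by omega) h₂ (by simpa using Low.at_focus G H₂ Γ Δ Γ₂ Δ₂)
      have := LNIFh.andr k₁ k₂ (G ++ [(Γ, Δ)]) H₂ Γ₂ Δ₂ B C (by simpa using h₁) (by simpa using h₂)
      exact ⟨max k₁ k₂ + 1, by omega, by simpa using this⟩
  | orl m₁ m₂ G H Γ Δ B C h₁ h₂ =>
    obtain ⟨G', H', Δ', rfl, h', -⟩ := hl.focus_left
    obtain ⟨k₁, hk₁, h₁⟩ := ih m₁ (by omega) h₁ (h' _)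
    obtain ⟨k₂, hk₂, h₂⟩ := ih m₂ (by omega) h₂ (h' _)
    exact ⟨max k₁ k₂ + 1, by omega, .orl _ _ _ _ _ _ _ _ h₁ h₂⟩
  | orr m G H Γ Δ B C h =>
    rcases hl.focus (by simp) with ⟨G', H', Δ', rfl, -, h'⟩ | ⟨hA, Γ₂, Δ₂, H₂, rfl, rfl⟩
    · obtain ⟨k, hk, h⟩ := ih m (by omega) h (h' ..)
      exact ⟨k + 1, by omega, .orr _ _ _ _ _ _ _ h⟩
    · obtain rfl := Multiset.singleton_inj.1 hA
      -- Both disjuncts are lowered, one after the other.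
      have e : ∀ Δ : Multiset (Formula α), Δ + {B, C} = Δ + {B} + {C} := fun Δ => by
        rw [add_assoc]; rfl
      rw [e] at h
      obtain ⟨k, hk, h⟩ := ih m (by omega) h
        (by simpa using Low.at_focus G H₂ Γ (Δ + {B}) Γ₂ Δ₂)
      obtain ⟨l, hl, h⟩ := ih k (by omega) h
        (by simpa using Low.at_focus G H₂ Γ Δ Γ₂ (Δ₂ + {C}))
      have := LNIFh.orr l (G ++ [(Γ, Δ)]) H₂ Γ₂ Δ₂ B C
        (by rw [e, add_right_comm]; simpa using h)
      exact ⟨l + 1, by omega, by simpa using this⟩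
  | impl m₁ m₂ G H Γ Δ B C h₁ h₂ =>
    obtain ⟨G', H', Δ', rfl, h', h''⟩ := hl.focus_left
    rw [add_comm {B} Δ] at h₂
    obtain ⟨k₁, hk₁, h₁⟩ := ih m₁ (by omega) h₁ (h' _)
    obtain ⟨k₂, hk₂, h₂⟩ := ih m₂ (by omega) h₂ (h'' _ _)
    rw [add_comm Δ' {B}] at h₂
    exact ⟨max k₁ k₂ + 1, by omega, .impl _ _ _ _ _ _ _ _ h₁ h₂⟩
  | impr1 m G Γ Δ B C h =>
    obtain ⟨G', Δ', rfl, h'⟩ := hl.focus_last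
    obtain ⟨k, hk, h⟩ := ih m (by omega) h (h' _)
    exact ⟨k + 1, by omega, .impr1 _ _ _ _ _ _ h⟩
  | impr2 m₁ m₂ G H Γ₁ Δ₁ Γ₂ Δ₂ B C h₁ h₂ =>
    rcases hl.focus₂ (by simp) with ⟨G', H', Δ₁', Δ₂', rfl, h', h''⟩ | ⟨hA, rfl⟩
    · obtain ⟨k₁, hk₁, h₁⟩ := ihs m₁ (by omega) h₁ (h'' _)
      obtain ⟨k₂, hk₂, h₂⟩ := ih m₂ (by omega) h₂ (by simpa using h' Γ₁ Γ₂ 0 {B.imp C})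
      exact ⟨max k₁ k₂ + 1, by omega, .impr2 _ _ _ _ _ _ _ _ _ _ h₁ (by simpa using h₂)⟩
    · -- The second premise is already the lowered sequent.
      obtain rfl := Multiset.singleton_inj.1 hA
      exact ⟨m₂, by omega, h₂⟩
  | lift m G H Γ₁ Δ₁ Γ₂ Δ₂ B h =>
    rw [← add_zero Δ₁] at hl
    rcases hl.focus₂ (by simp) with ⟨G', H', Δ₁', Δ₂', rfl, h', -⟩ | ⟨hA, -⟩
    · obtain ⟨k, hk, h⟩ := ih m (by omega) h (by simpa using h' (Γ₁ + {B}) (Γ₂ + {B}) 0 0)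
      have := LNIFh.lift k G' H' Γ₁ Δ₁' Γ₂ Δ₂' B (by simpa using h)
      exact ⟨k + 1, by omega, by simpa using this⟩
    · exact absurd hA.symm (Multiset.singleton_ne_zero A)
  | alll m G H Γ Δ B x a h =>
    obtain ⟨G', H', Δ', rfl, h', -⟩ := hl.focus_left
    obtain ⟨k, hk, h⟩ := ih m (by omega) h (h' _)
    exact ⟨k + 1, by omega, .alll _ _ _ _ _ _ _ _ h⟩
  | allr1 m G Γ Δ B x a ha h =>
    have ha' := hl.not_occurs ha
    obtain ⟨G', Δ', rfl, h'⟩ := hl.focus_last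
    obtain ⟨k, hk, h⟩ := ih m (by omega) h (h' _)
    exact ⟨k + 1, by omega, .allr1 _ _ _ _ _ _ a ha' h⟩
  | allr2 m₁ m₂ G H Γ₁ Δ₁ Γ₂ Δ₂ B x a ha h₁ h₂ =>
    have ha' := hl.not_occurs ha
    rcases hl.focus₂ (by simp) with ⟨G', H', Δ₁', Δ₂', rfl, h', h''⟩ | ⟨hA, rfl⟩
    · obtain ⟨k₁, hk₁, h₁⟩ := ihs m₁ (by omega) h₁ (h'' _)
      obtain ⟨k₂, hk₂, h₂⟩ := ih m₂ (by omega) h₂ (by simpa using h' Γ₁ Γ₂ 0 {.all x B})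
      exact ⟨max k₁ k₂ + 1, by omega,
        .allr2 _ _ _ _ _ _ _ _ _ _ a ha' h₁ (by simpa using h₂)⟩
    · -- The second premise is already the lowered sequent.
      obtain rfl := Multiset.singleton_inj.1 hA
      exact ⟨m₂, by omega, h₂⟩
  | exl m G H Γ Δ B x a ha h =>
    have ha' := hl.not_occurs ha
    obtain ⟨G', H', Δ', rfl, h', -⟩ := hl.focus_left
    obtain ⟨k, hk, h⟩ := ih m (by omega) h (h' _)
    exact ⟨k + 1, by omega, .exl _ _ _ _ _ _ _ a ha' h⟩
  | exr m G H Γ Δ B x a h =>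
    rw [add_comm _ Δ] at h hl
    rcases hl.focus (by simp) with ⟨G', H', Δ', rfl, -, h'⟩ | ⟨hA, Γ₂, Δ₂, H₂, rfl, rfl⟩
    · obtain ⟨k, hk, h⟩ := ih m (by omega) h (h' ..)
      rw [add_comm Δ'] at h ⊢
      exact ⟨k + 1, by omega, .exr _ _ _ _ _ _ _ a h⟩
    · obtain rfl := Multiset.singleton_inj.1 hA
      obtain ⟨k, hk, h⟩ := ih m (by omega) h (by simpa using Low.at_focus G H₂ Γ Δ Γ₂ Δ₂)
      have := LNIFh.exr k (G ++ [(Γ, Δ)]) H₂ Γ₂ Δ₂ B x a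
        (by rw [add_comm _ Δ₂]; simpa using h)
      exact ⟨k + 1, by omega, by rw [add_comm _ Δ₂] at this; simpa using this⟩

/-- **hp-admissibility of `(lwr)`.** If `𝒢 ∥ Γ₁ ⊢ A, Δ₁ ∥ Γ₂ ⊢ Δ₂ ∥ ℋ` has an
`LNIF` derivation of height `h`, then `𝒢 ∥ Γ₁ ⊢ Δ₁ ∥ Γ₂ ⊢ A, Δ₂ ∥ ℋ` has one
of height at most `h`. -/
theorem lwr_hp_admissible {α : Type} (G H : LNS α)
    (Γ₁ Δ₁ Γ₂ Δ₂ : Multiset (Formula α)) (A : Formula α) (h : ℕ)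
    (hd : LNIFh h (G ++ [(Γ₁, {A} + Δ₁), (Γ₂, Δ₂)] ++ H)) :
    ∃ h' ≤ h, LNIFh h' (G ++ [(Γ₁, Δ₁), (Γ₂, {A} + Δ₂)] ++ H) := by
  rw [add_comm _ Δ₁] at hd
  rw [add_comm _ Δ₂]
  exact hd.low (Low.at_focus G H Γ₁ Δ₁ Γ₂ Δ₂)
end

section
/- (m-invertibility for left conjunction and disjunction) Let k₁,…,kₙ ∈ ℕ with k₁+⋯+kₙ ≥ 1, and write A^k for k copies of a formula A in a multiset. (i) If Γ₁,(A∧B)^{k₁} ⊢ Δ₁ ∥ ⋯ ∥ Γₙ,(A∧B)^{kₙ} ⊢ Δₙ is derivable in LNIF, then Γ₁,A^{k₁},B^{k₁} ⊢ Δ₁ ∥ ⋯ ∥ Γₙ,A^{kₙ},B^{kₙ} ⊢ Δₙ is derivable in LNIF. (ii) If Γ₁,(A∨B)^{k₁} ⊢ Δ₁ ∥ ⋯ ∥ Γₙ,(A∨B)^{kₙ} ⊢ Δₙ is derivable in LNIF, then both Γ₁,A^{k₁} ⊢ Δ₁ ∥ ⋯ ∥ Γₙ,A^{kₙ} ⊢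 Δₙ and Γ₁,B^{k₁} ⊢ Δ₁ ∥ ⋯ ∥ Γₙ,B^{kₙ} ⊢ Δₙ are derivable in LNIF. -/
/-! ### Inversions and replacement in multisets -/

/-- `Inversion C S`: the multiset `S` replaces the antecedent formula `C` in a premise of
the left rule for `C`, where `C` is a conjunction or a disjunction. -/
inductive Inversion {α : Type} : Formula α → Multiset (Formula α) → Prop
  | and (A B : Formula α) : Inversion (A.and B) {A, B}
  | or_left (A B : Formula α) : Inversion (A.or B) {A}
  | or_right (A B : Formula α) : Inversion (A.or B) {B}

/-- `Γ'` arises from `Γ` by replacing some number (possibly zero) of copies of `C` by `S` each. -/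
def Replaces {α : Type} (C : Formula α) (S Γ Γ' : Multiset (Formula α)) : Prop :=
  ∃ (Γ₀ : Multiset (Formula α)) (k : ℕ), Γ = Γ₀ + k • {C} ∧ Γ' = Γ₀ + k • S

/-- Componentwise replacement of copies of `C` by `S` in antecedents; succedents are unchanged. -/
def ReplacesLNS {α : Type} (C : Formula α) (S : Multiset (Formula α)) (G G' : LNS α) : Prop :=
  List.Forall₂ (fun P Q => Replaces C S P.1 Q.1 ∧ P.2 = Q.2) G G'

namespace Replaces

variable {α : Type} {C : Formula α} {S Γ Γ' : Multiset (Formula α)}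

theorem refl (Γ : Multiset (Formula α)) : Replaces C S Γ Γ :=
  ⟨Γ, 0, by simp, by simp⟩

theorem add (h : Replaces C S Γ Γ') (T : Multiset (Formula α)) :
    Replaces C S (Γ + T) (Γ' + T) := by
  obtain ⟨Γ₀, k, rfl, rfl⟩ := h
  exact ⟨Γ₀ + T, k, by abel, by abel⟩

theorem add_replaced (h : Replaces C S Γ Γ') : Replaces C S (Γ + {C}) (Γ' + S) := by
  obtain ⟨Γ₀, k, rfl, rfl⟩ := h
  exact ⟨Γ₀, k + 1, by rw [succ_nsmul, add_assoc], by rw [succ_nsmul, add_assoc]⟩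

/-- A displayed formula is either kept or is itself one of the replaced copies. -/
theorem cases_add {X : Formula α} (h : Replaces C S (Γ + {X}) Γ') :
    (∃ Γ₁, Γ' = Γ₁ + {X} ∧ Replaces C S Γ Γ₁) ∨
      (X = C ∧ ∃ Γ₁, Γ' = Γ₁ + S ∧ Replaces C S Γ Γ₁) := by
  obtain ⟨Γ₀, k, h, rfl⟩ := h
  have hX : X ∈ Γ₀ + k • {C} := by rw [← h]; simp
  rcases Multiset.mem_add.1 hX with hX | hX
  · left
    obtain ⟨T, rfl⟩ := Multiset.exists_cons_of_mem hX
    rw [← Multiset.singleton_add] at h ⊢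
    refine ⟨T + k • S, by abel, T, k, ?_, rfl⟩
    apply add_right_cancel (b := {X})
    rw [h]; abel
  · right
    cases k with
    | zero => simp at hX
    | succ k =>
      obtain rfl : X = C := by
        simpa using Multiset.mem_of_mem_nsmul hX
      refine ⟨rfl, Γ₀ + k • S, by rw [succ_nsmul, add_assoc], Γ₀, k, ?_, rfl⟩
      apply add_right_cancel (b := {X})
      rw [h, succ_nsmul, add_assoc]

theorem of_ne {X : Formula α} (h : Replaces C S (Γ + {X}) Γ') (hX : X ≠ C) :
    ∃ Γ₁, Γ' = Γ₁ + {X} ∧ Replaces C S Γ Γ₁ := by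
  rcases h.cases_add with h | ⟨h, -⟩
  · exact h
  · exact absurd h hX

end Replaces

/-- Replacing a formula by an inversion of it introduces no parameter. -/
theorem Inversion.params_subset {α : Type} {C : Formula α} {S : Multiset (Formula α)}
    (hCS : Inversion C S) {X : Formula α} (hX : X ∈ S) {a : α} (ha : a ∈ X.params) :
    a ∈ C.params := by
  cases hCS <;> simp only [Multiset.insert_eq_cons, Multiset.mem_cons,
    Multiset.mem_singleton] at hX <;> simp only [Formula.params, List.mem_append] <;>
    aesop

/-! ### Replacement in linear nested sequents -/

namespace ReplacesLNS

variable {α : Type} {C : Formula α} {S : Multiset (Formula α)}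

theorem append {G G' H H' : LNS α} (h : ReplacesLNS C S G G') (h' : ReplacesLNS C S H H') :
    ReplacesLNS C S (G ++ H) (G' ++ H') :=
  List.rel_append h h'

theorem of_append {G H X : LNS α} (h : ReplacesLNS C S (G ++ H) X) :
    ∃ G' H', X = G' ++ H' ∧ ReplacesLNS C S G G' ∧ ReplacesLNS C S H H' :=
  ⟨X.take G.length, X.drop G.length, (List.take_append_drop _ _).symm,
    (List.forall₂_take_append _ _ _ (List.Forall₂.flip h)).flip,
    (List.forall₂_drop_append _ _ _ (List.Forall₂.flip h)).flip⟩

theorem cons {G G' : LNS α} {Γ Γ' Δ : Multiset (Formula α)} (h : Replaces C S Γ Γ')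
    (h' : ReplacesLNS C S G G') : ReplacesLNS C S ((Γ, Δ) :: G) ((Γ', Δ) :: G') :=
  List.Forall₂.cons ⟨h, rfl⟩ h'

theorem nil : ReplacesLNS C S [] [] := List.Forall₂.nil

theorem of_cons {G X : LNS α} {Γ Δ : Multiset (Formula α)}
    (h : ReplacesLNS C S ((Γ, Δ) :: G) X) :
    ∃ Γ' G', X = (Γ', Δ) :: G' ∧ Replaces C S Γ Γ' ∧ ReplacesLNS C S G G' := by
  obtain ⟨⟨Γ', Δ'⟩, G', ⟨h₁, h₂⟩, h₃, rfl⟩ := List.forall₂_cons_left_iff.1 h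
  simp only at h₁ h₂
  subst h₂
  exact ⟨Γ', G', rfl, h₁, h₃⟩

theorem of_one {G H X : LNS α} {Γ Δ : Multiset (Formula α)}
    (h : ReplacesLNS C S (G ++ [(Γ, Δ)] ++ H) X) :
    ∃ G' Γ' H', X = G' ++ [(Γ', Δ)] ++ H' ∧ ReplacesLNS C S G G' ∧ Replaces C S Γ Γ' ∧
      ReplacesLNS C S H H' := by
  rw [List.append_assoc] at h
  obtain ⟨G', Y, rfl, hG, h⟩ := h.of_append
  obtain ⟨Γ', H', rfl, hΓ, hH⟩ := h.of_cons
  exact ⟨G', Γ', H', by simp, hG, hΓ, hH⟩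

theorem one {G H G' H' : LNS α} {Γ Γ' Δ : Multiset (Formula α)}
    (hG : ReplacesLNS C S G G') (hΓ : Replaces C S Γ Γ') (hH : ReplacesLNS C S H H') :
    ReplacesLNS C S (G ++ [(Γ, Δ)] ++ H) (G' ++ [(Γ', Δ)] ++ H') :=
  (hG.append (cons hΓ nil)).append hH

theorem of_two {G H X : LNS α} {Γ₁ Δ₁ Γ₂ Δ₂ : Multiset (Formula α)}
    (h : ReplacesLNS C S (G ++ [(Γ₁, Δ₁), (Γ₂, Δ₂)] ++ H) X) :
    ∃ G' Γ₁' Γ₂' H', X = G' ++ [(Γ₁', Δ₁), (Γ₂', Δ₂)] ++ H' ∧ ReplacesLNS C S G G' ∧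
      Replaces C S Γ₁ Γ₁' ∧ Replaces C S Γ₂ Γ₂' ∧ ReplacesLNS C S H H' := by
  rw [List.append_assoc] at h
  obtain ⟨G', Y, rfl, hG, h⟩ := h.of_append
  obtain ⟨Γ₁', Y, rfl, hΓ₁, h⟩ := h.of_cons
  obtain ⟨Γ₂', H', rfl, hΓ₂, hH⟩ := h.of_cons
  exact ⟨G', Γ₁', Γ₂', H', by simp, hG, hΓ₁, hΓ₂, hH⟩

theorem two {G H G' H' : LNS α} {Γ₁ Γ₁' Δ₁ Γ₂ Γ₂' Δ₂ : Multiset (Formula α)}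
    (hG : ReplacesLNS C S G G') (hΓ₁ : Replaces C S Γ₁ Γ₁') (hΓ₂ : Replaces C S Γ₂ Γ₂')
    (hH : ReplacesLNS C S H H') :
    ReplacesLNS C S (G ++ [(Γ₁, Δ₁), (Γ₂, Δ₂)] ++ H) (G' ++ [(Γ₁', Δ₁), (Γ₂', Δ₂)] ++ H') :=
  (hG.append (cons hΓ₁ (cons hΓ₂ nil))).append hH

theorem three {G H G' H' : LNS α} {Γ₁ Γ₁' Δ₁ Γ₂ Γ₂' Δ₂ Γ Δ : Multiset (Formula α)}
    (hG : ReplacesLNS C S G G') (hΓ₁ : Replaces C S Γ₁ Γ₁') (hΓ₂ : Replaces C S Γ₂ Γ₂')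
    (hH : ReplacesLNS C S H H') :
    ReplacesLNS C S (G ++ [(Γ₁, Δ₁), (Γ, Δ), (Γ₂, Δ₂)] ++ H)
      (G' ++ [(Γ₁', Δ₁), (Γ, Δ), (Γ₂', Δ₂)] ++ H') :=
  (hG.append (cons hΓ₁ (cons (.refl Γ) (cons hΓ₂ nil)))).append hH

/-- Eigenvariable conditions are preserved by replacement. -/
theorem not_occurs (hCS : Inversion C S) {G G' : LNS α} (h : ReplacesLNS C S G G') {a : α}
    (ha : ¬ occursInLNS a G) : ¬ occursInLNS a G' := by
  -- A parameter of an inserted `S` is a parameter of the copy of `C` that it replaces.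
  refine fun ha' => ha ?_
  obtain ⟨Q, hQ, hocc⟩ := ha'
  obtain ⟨P, hP, ⟨Γ₀, k, hP₁, hQ₁⟩, hΔ⟩ : ∃ P ∈ G, Replaces C S P.1 Q.1 ∧ P.2 = Q.2 := by
    clear ha hocc
    induction h with
    | nil => simp at hQ
    | cons hPQ _ ih =>
      rcases List.mem_cons.1 hQ with rfl | hQ
      · exact ⟨_, List.mem_cons_self, hPQ⟩
      · obtain ⟨P, hP, h⟩ := ih hQ
        exact ⟨P, List.mem_cons_of_mem _ hP, h⟩
  refine ⟨P, hP, hocc.imp ?_ (by rw [hΔ]; exact id)⟩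
  rintro ⟨X, hX, haX⟩
  rw [hQ₁] at hX
  rcases Multiset.mem_add.1 hX with hX | hX
  · exact ⟨X, by rw [hP₁]; exact Multiset.mem_add.2 (.inl hX), haX⟩
  · refine ⟨C, ?_, hCS.params_subset (Multiset.mem_of_mem_nsmul hX) haX⟩
    rw [hP₁]
    cases k with
    | zero => simp at hX
    | succ k => simp [succ_nsmul]

end ReplacesLNS

/-! ### Invertibility of the left rules -/

/-- The rule `lift` applied successively to every member of a multiset. -/
theorem LNIF.lift_multiset {α : Type} (G H : LNS α) (Δ₁ Γ₂ Δ₂ S : Multiset (Formula α)) :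
    ∀ Γ₁ : Multiset (Formula α), LNIF (G ++ [(Γ₁ + S, Δ₁), (Γ₂ + S, Δ₂)] ++ H) →
      LNIF (G ++ [(Γ₁ + S, Δ₁), (Γ₂, Δ₂)] ++ H) := by
  induction S using Multiset.induction with
  | empty => intro Γ₁ h; simpa using h
  | cons A S ih =>
    intro Γ₁ h
    have e : ∀ Γ : Multiset (Formula α), Γ + A ::ₘ S = Γ + S + {A} := fun Γ => by
      rw [← Multiset.singleton_add]; abel
    have e' : Γ₁ + S + {A} = Γ₁ + {A} + S := by abel
    rw [e, e] at h
    have h' := LNIF.lift _ _ _ _ _ _ _ h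
    rw [e'] at h'
    rw [e, e']
    exact ih _ h'

/-- Derivability is preserved when antecedent copies of `C`, in arbitrary components, are replaced
by an inversion `S` of `C`. -/
theorem LNIF.invert {α : Type} {C : Formula α} {S : Multiset (Formula α)} (hCS : Inversion C S)
    {G : LNS α} (h : LNIF G) : ∀ G' : LNS α, ReplacesLNS C S G G' → LNIF G' := by
  induction h with
  | id1 G H Γ Δ p ts =>
    intro X hX
    obtain ⟨G', Γ', H', rfl, hG, hΓ, hH⟩ := hX.of_one
    obtain ⟨Γ', rfl, hΓ'⟩ := hΓ.of_ne (by cases hCS <;> simp)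
    exact LNIF.id1 _ _ _ _ _ _
  | id2 G H F Γ₁ Δ₁ Γ₂ Δ₂ p ts =>
    intro X hX
    obtain ⟨Y, Γ₂', F', rfl, hY, -, -⟩ := hX.of_one
    obtain ⟨G', Γ', H', rfl, hG, hΓ, hH⟩ := hY.of_one
    obtain ⟨Γ', rfl, hΓ'⟩ := hΓ.of_ne (by cases hCS <;> simp)
    exact LNIF.id2 _ _ _ _ _ _ _ _ _
  | botl G H Γ Δ =>
    intro X hX
    obtain ⟨G', Γ', H', rfl, hG, hΓ, hH⟩ := hX.of_one
    obtain ⟨Γ', rfl, hΓ'⟩ := hΓ.of_ne (by cases hCS <;> simp)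
    exact LNIF.botl _ _ _ _
  | andl G H Γ Δ A B _ ih =>
    intro X hX
    obtain ⟨G', Γ', H', rfl, hG, hΓ, hH⟩ := hX.of_one
    rcases hΓ.cases_add with ⟨Γ', rfl, hΓ'⟩ | ⟨rfl, Γ', rfl, hΓ'⟩
    · exact LNIF.andl _ _ _ _ _ _ (ih _ (.one hG (hΓ'.add _) hH))
    · cases hCS
      exact ih _ (.one hG (hΓ'.add _) hH)
  | andr G H Γ Δ A B _ _ ih₁ ih₂ =>
    intro X hX
    obtain ⟨G', Γ', H', rfl, hG, hΓ, hH⟩ := hX.of_one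
    exact LNIF.andr _ _ _ _ _ _ (ih₁ _ (.one hG hΓ hH)) (ih₂ _ (.one hG hΓ hH))
  | orl G H Γ Δ A B _ _ ih₁ ih₂ =>
    intro X hX
    obtain ⟨G', Γ', H', rfl, hG, hΓ, hH⟩ := hX.of_one
    rcases hΓ.cases_add with ⟨Γ', rfl, hΓ'⟩ | ⟨rfl, Γ', rfl, hΓ'⟩
    · exact LNIF.orl _ _ _ _ _ _ (ih₁ _ (.one hG (hΓ'.add _) hH))
        (ih₂ _ (.one hG (hΓ'.add _) hH))
    · cases hCS
      · exact ih₁ _ (.one hG (hΓ'.add _) hH)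
      · exact ih₂ _ (.one hG (hΓ'.add _) hH)
  | orr G H Γ Δ A B _ ih =>
    intro X hX
    obtain ⟨G', Γ', H', rfl, hG, hΓ, hH⟩ := hX.of_one
    exact LNIF.orr _ _ _ _ _ _ (ih _ (.one hG hΓ hH))
  | impl G H Γ Δ A B _ _ ih₁ ih₂ =>
    intro X hX
    obtain ⟨G', Γ', H', rfl, hG, hΓ, hH⟩ := hX.of_one
    obtain ⟨Γ', rfl, hΓ'⟩ := hΓ.of_ne (by cases hCS <;> simp)
    exact LNIF.impl _ _ _ _ _ _ (ih₁ _ (.one hG (hΓ'.add _) hH))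
      (ih₂ _ (.one hG (hΓ'.add _) hH))
  | impr1 G Γ Δ A B _ ih =>
    intro X hX
    obtain ⟨G', Y, rfl, hG, hY⟩ := hX.of_append
    obtain ⟨Γ', Z, rfl, hΓ, hZ⟩ := hY.of_cons
    obtain rfl := List.forall₂_nil_left_iff.1 hZ
    exact LNIF.impr1 _ _ _ _ _ (ih _ (hG.append (.cons hΓ (.cons (.refl _) .nil))))
  | impr2 G H Γ₁ Δ₁ Γ₂ Δ₂ A B _ _ ih₁ ih₂ =>
    intro X hX
    obtain ⟨G', Γ₁', Γ₂', H', rfl, hG, hΓ₁, hΓ₂, hH⟩ := hX.of_two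
    exact LNIF.impr2 _ _ _ _ _ _ _ _ (ih₁ _ (.three hG hΓ₁ hΓ₂ hH))
      (ih₂ _ (.two hG hΓ₁ hΓ₂ hH))
  | lift G H Γ₁ Δ₁ Γ₂ Δ₂ A _ ih =>
    intro X hX
    obtain ⟨G', Γ₁', Γ₂', H', rfl, hG, hΓ₁, hΓ₂, hH⟩ := hX.of_two
    rcases hΓ₁.cases_add with ⟨Γ₁', rfl, hΓ₁'⟩ | ⟨rfl, Γ₁', rfl, hΓ₁'⟩
    · exact LNIF.lift _ _ _ _ _ _ _ (ih _ (.two hG (hΓ₁'.add _) (hΓ₂.add _) hH))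
    -- The copy added in the second component is a fresh copy of `C`; it is replaced too.
    · exact LNIF.lift_multiset _ _ _ _ _ _ _
        (ih _ (.two hG hΓ₁'.add_replaced hΓ₂.add_replaced hH))
  | alll G H Γ Δ A x a _ ih =>
    intro X hX
    obtain ⟨G', Γ', H', rfl, hG, hΓ, hH⟩ := hX.of_one
    obtain ⟨Γ', rfl, hΓ'⟩ := hΓ.of_ne (by cases hCS <;> simp)
    exact LNIF.alll _ _ _ _ _ _ _ (ih _ (.one hG (hΓ'.add _) hH))
  | allr1 G Γ Δ A x a ha _ ih =>
    intro X hX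
    have ha' := hX.not_occurs hCS ha
    obtain ⟨G', Y, rfl, hG, hY⟩ := hX.of_append
    obtain ⟨Γ', Z, rfl, hΓ, hZ⟩ := hY.of_cons
    obtain rfl := List.forall₂_nil_left_iff.1 hZ
    exact LNIF.allr1 _ _ _ _ _ a ha' (ih _ (hG.append (.cons hΓ (.cons (.refl _) .nil))))
  | allr2 G H Γ₁ Δ₁ Γ₂ Δ₂ A x a ha _ _ ih₁ ih₂ =>
    intro X hX
    have ha' := hX.not_occurs hCS ha
    obtain ⟨G', Γ₁', Γ₂', H', rfl, hG, hΓ₁, hΓ₂, hH⟩ := hX.of_two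
    exact LNIF.allr2 _ _ _ _ _ _ _ _ a ha' (ih₁ _ (.three hG hΓ₁ hΓ₂ hH))
      (ih₂ _ (.two hG hΓ₁ hΓ₂ hH))
  | exl G H Γ Δ A x a ha _ ih =>
    intro X hX
    have ha' := hX.not_occurs hCS ha
    obtain ⟨G', Γ', H', rfl, hG, hΓ, hH⟩ := hX.of_one
    obtain ⟨Γ', rfl, hΓ'⟩ := hΓ.of_ne (by cases hCS <;> simp)
    exact LNIF.exl _ _ _ _ _ _ a ha' (ih _ (.one hG (hΓ'.add _) hH))
  | exr G H Γ Δ A x a _ ih =>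
    intro X hX
    obtain ⟨G', Γ', H', rfl, hG, hΓ, hH⟩ := hX.of_one
    exact LNIF.exr _ _ _ _ _ _ a (ih _ (.one hG hΓ hH))

theorem ReplacesLNS.ofFn {α : Type} {C : Formula α} {S : Multiset (Formula α)} {m : ℕ}
    {Γ Γ' Δ : Fin m → Multiset (Formula α)} (h : ∀ i, Replaces C S (Γ i) (Γ' i)) :
    ReplacesLNS C S (List.ofFn fun i => (Γ i, Δ i)) (List.ofFn fun i => (Γ' i, Δ i)) := by
  refine List.forall₂_iff_get.2 ⟨by simp, fun i h₁ h₂ => ?_⟩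
  simpa using h _

/-- **m-invertibility of `(∧_l)` and `(∨_l)`.** With `k₁ + ⋯ + kₙ ≥ 1` copies
distributed over the `n ≥ 1` components:
(i) derivability of `Γ₁,(A∧B)^{k₁} ⊢ Δ₁ ∥ ⋯` gives derivability of
`Γ₁,A^{k₁},B^{k₁} ⊢ Δ₁ ∥ ⋯`;
(ii) derivability of `Γ₁,(A∨B)^{k₁} ⊢ Δ₁ ∥ ⋯` gives derivability of both
`Γ₁,A^{k₁} ⊢ Δ₁ ∥ ⋯` and `Γ₁,B^{k₁} ⊢ Δ₁ ∥ ⋯`. -/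
theorem m_invertibility_and_or {α : Type} (n : ℕ)
    (Γs Δs : Fin (n + 1) → Multiset (Formula α)) (k : Fin (n + 1) → ℕ)
    (hk : 1 ≤ ∑ i, k i) (A B : Formula α) :
    (LNIF (List.ofFn (fun i => (Γs i + Multiset.replicate (k i) (A.and B), Δs i))) →
      LNIF (List.ofFn (fun i =>
        (Γs i + Multiset.replicate (k i) A + Multiset.replicate (k i) B, Δs i)))) ∧
    (LNIF (List.ofFn (fun i => (Γs i + Multiset.replicate (k i) (A.or B), Δs i))) →
      LNIF (List.ofFn (fun i => (Γs i + Multiset.replicate (k i) A, Δs i))) ∧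
      LNIF (List.ofFn (fun i => (Γs i + Multiset.replicate (k i) B, Δs i)))) := by
  refine ⟨fun h => ?_, fun h => ⟨?_, ?_⟩⟩
  · refine h.invert (.and A B) _ (.ofFn fun i => ⟨Γs i, k i, ?_, ?_⟩)
    · rw [Multiset.nsmul_singleton]
    · rw [add_assoc, ← Multiset.nsmul_singleton, ← Multiset.nsmul_singleton, ← nsmul_add]
      rfl
  · refine h.invert (.or_left A B) _ (.ofFn fun i => ⟨Γs i, k i, ?_, ?_⟩) <;>
      rw [Multiset.nsmul_singleton]
  · refine h.invert (.or_right A B) _ (.ofFn fun i => ⟨Γs i, k i, ?_, ?_⟩) <;>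
      rw [Multiset.nsmul_singleton]
end
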